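/- Let n ≥ 2 be fixed and let (X_d)_{d≥1} be a unitarily invariant sequence of random positive semidefinite matrices X_d ∈ M_n(ℂ) ⊗ M_d(ℂ) converging strongly to a compactly supported probability measure μ with supp(μ) ⊆ [A,B] ⊆ [0,∞), mean m > 0 and variance σ². If B/m < 1 + n·σ²/m² − 2·(σ/m)·√(n−1), then almost surely, for all sufficiently large d, X_d ∉ SEP_{n,d}; in particular lim_{d→∞} P(X_d ∈ SEP_{n,d}) = 0. -/

import Mathlib

open MeasureTheory Filter Topology Polynomial Matrix Kronecker
open scoped ComplexOrder

noncomputable section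

/-- Measurable space structure on matrices (entrywise). -/
instance matMS (m n : Type*) : MeasurableSpace (Matrix m n ℂ) :=
  inferInstanceAs (MeasurableSpace (m → n → ℂ))

/-- The ℓ²→ℓ² operator norm of a complex square matrix. -/
def opNorm {N : Type*} [Fintype N] [DecidableEq N] (X : Matrix N N ℂ) : ℝ :=
  ‖Matrix.toEuclideanCLM (𝕜 := ℂ) (n := N) X‖

/-- Application of a real polynomial to a complex square matrix. -/
def polyApply {N : Type*} [Fintype N] [DecidableEq N] (P : Polynomial ℝ)
    (X : Matrix N N ℂ) : Matrix N N ℂ :=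
  Polynomial.aeval X (P.map (algebraMap ℝ ℂ))

/-- The (topological) support of a measure on ℝ: points all of whose open
neighbourhoods have positive measure. -/
def msupport (μ : Measure ℝ) : Set ℝ :=
  {x | ∀ U : Set ℝ, IsOpen U → x ∈ U → 0 < μ U}

/-- Strong convergence of a sequence of random matrices `X d ∈ M_n(ℂ) ⊗ M_d(ℂ)`
towards a compactly supported probability measure `μ`: almost surely, for every
real polynomial `P`, the normalized traces of `P(X d)` converge to `∫ P dμ` and the
operator norms of `P(X d)` converge to `sup {|P(x)| : x ∈ supp μ}`. -/
def StrongConv {Ω : Type*} [MeasurableSpace Ω] (ℙ : Measure Ω) (n : ℕ)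
    (X : (d : ℕ) → Ω → Matrix (Fin n × Fin d) (Fin n × Fin d) ℂ)
    (μ : Measure ℝ) : Prop :=
  ∀ᵐ ω ∂ℙ, ∀ P : Polynomial ℝ,
    Tendsto (fun d : ℕ => ((n : ℂ) * (d : ℂ))⁻¹ * (polyApply P (X d ω)).trace) atTop
      (𝓝 ((∫ x, P.eval x ∂μ : ℝ) : ℂ)) ∧
    Tendsto (fun d : ℕ => opNorm (polyApply P (X d ω))) atTop
      (𝓝 (sSup ((fun x => |P.eval x|) '' msupport μ)))

/-- Unitary invariance of a sequence of random matrices: for every `d` and every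
unitary `U`, the random matrix `U (X d) U*` has the same distribution as `X d`. -/
def UnitInv {Ω : Type*} [MeasurableSpace Ω] (ℙ : Measure Ω) (n : ℕ)
    (X : (d : ℕ) → Ω → Matrix (Fin n × Fin d) (Fin n × Fin d) ℂ) : Prop :=
  ∀ d : ℕ, ∀ U : Matrix (Fin n × Fin d) (Fin n × Fin d) ℂ,
    U ∈ unitary (Matrix (Fin n × Fin d) (Fin n × Fin d) ℂ) →
    Measure.map (fun ω => U * X d ω * star U) ℙ = Measure.map (X d) ℙ

/-- The separable cone `SEP_{n,d}`. -/
def SEP (n d : ℕ) : Set (Matrix (Fin n × Fin d) (Fin n × Fin d) ℂ) :=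
  {X | ∃ (k : ℕ) (A : Fin k → Matrix (Fin n) (Fin n) ℂ)
      (B : Fin k → Matrix (Fin d) (Fin d) ℂ),
    (∀ i, (A i).PosSemidef) ∧ (∀ i, (B i).PosSemidef) ∧ X = ∑ i, A i ⊗ₖ B i}

/-- The partial transpose on `M_n(ℂ) ⊗ M_d(ℂ)`: transposition of the first factor. -/
def ptrans {n d : ℕ} (X : Matrix (Fin n × Fin d) (Fin n × Fin d) ℂ) :
    Matrix (Fin n × Fin d) (Fin n × Fin d) ℂ :=
  fun p q => X (q.1, p.2) (p.1, q.2)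

/-- The PPT cone `PPT_{n,d}`: positive semidefinite matrices with positive
semidefinite partial transpose. -/
def PPT (n d : ℕ) : Set (Matrix (Fin n × Fin d) (Fin n × Fin d) ℂ) :=
  {X | X.PosSemidef ∧ (ptrans X).PosSemidef}

/-! ### Moments of low-degree functions on the discrete cube -/

/-- The sign attached to a Boolean. -/
def boolSign (b : Bool) : ℝ := if b then 1 else -1

lemma boolSign_mul_self (b : Bool) : boolSign b * boolSign b = 1 := by
  cases b <;> simp [boolSign]

/-- The uniform average over the discrete cube. -/
def cubeAvg {M : ℕ} (f : (Fin M → Bool) → ℝ) : ℝ := (∑ s, f s) / 2 ^ M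

lemma cubeAvg_zero_dim (f : (Fin 0 → Bool) → ℝ) : cubeAvg f = f default := by
  simp only [cubeAvg, Fintype.sum_unique, pow_zero, div_one]
  exact congrArg f (Subsingleton.elim _ _)

lemma cubeAvg_succ {M : ℕ} (f : (Fin (M + 1) → Bool) → ℝ) :
    cubeAvg f = (cubeAvg (fun s => f (Fin.cons true s))
      + cubeAvg (fun s => f (Fin.cons false s))) / 2 := by
  have h : ∑ s, f s = ∑ s, f (Fin.cons true s) + ∑ s, f (Fin.cons false s) := by
    rw [← (Fin.consEquiv (fun _ : Fin (M + 1) => Bool)).sum_comp, Fintype.sum_prod_type]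
    simp [Fin.consEquiv]
  simp only [cubeAvg, h]
  field_simp
  ring

lemma cubeAvg_add {M : ℕ} (f g : (Fin M → Bool) → ℝ) :
    cubeAvg (fun s => f s + g s) = cubeAvg f + cubeAvg g := by
  simp [cubeAvg, Finset.sum_add_distrib, add_div]

lemma cubeAvg_const_mul {M : ℕ} (c : ℝ) (f : (Fin M → Bool) → ℝ) :
    cubeAvg (fun s => c * f s) = c * cubeAvg f := by
  simp [cubeAvg, ← Finset.mul_sum, mul_div_assoc]

lemma cubeAvg_const {M : ℕ} (c : ℝ) : cubeAvg (fun _ : Fin M → Bool => c) = c := by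
  simp [cubeAvg]

lemma cubeAvg_mono {M : ℕ} {f g : (Fin M → Bool) → ℝ} (h : ∀ s, f s ≤ g s) :
    cubeAvg f ≤ cubeAvg g := by
  unfold cubeAvg
  gcongr with s
  exact h s

lemma cubeAvg_nonneg {M : ℕ} {f : (Fin M → Bool) → ℝ} (h : ∀ s, 0 ≤ f s) :
    0 ≤ cubeAvg f :=
  div_nonneg (Finset.sum_nonneg fun s _ => h s) (by positivity)

lemma cubeAvg_mul_sq_le {M : ℕ} (f g : (Fin M → Bool) → ℝ) :
    cubeAvg (fun s => f s * g s) ^ 2 ≤ cubeAvg (fun s => f s ^ 2) * cubeAvg (fun s => g s ^ 2) := by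
  unfold cubeAvg
  rw [div_pow, div_mul_div_comm, ← sq]
  gcongr
  exact Finset.sum_mul_sq_le_sq_mul_sq _ _ _

lemma cubeAvg_sign_split {M : ℕ} (g h : (Fin M → Bool) → ℝ) (φ : ℝ → ℝ) :
    cubeAvg (fun s : Fin (M + 1) → Bool => φ (g (Fin.tail s) + boolSign (s 0) * h (Fin.tail s)))
      = cubeAvg (fun s => (φ (g s + h s) + φ (g s - h s)) / 2) := by
  rw [cubeAvg_succ]
  simp only [cubeAvg, Fin.tail_cons, Fin.cons_zero, boolSign]
  rw [← Finset.sum_div, Finset.sum_add_distrib]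
  simp [sub_eq_add_neg]
  ring

/-- Functions on the discrete cube of degree at most `k`. -/
def CubeDegLE : (M : ℕ) → ℕ → ((Fin M → Bool) → ℝ) → Prop
  | 0, _, _ => True
  | M + 1, k, f => ∃ g h : (Fin M → Bool) → ℝ,
      (f = fun s => g (Fin.tail s) + boolSign (s 0) * h (Fin.tail s)) ∧ CubeDegLE M k g ∧
      ((k = 0 ∧ h = 0) ∨ ∃ l, k = l + 1 ∧ CubeDegLE M l h)

lemma CubeDegLE.zero {M : ℕ} : ∀ k, CubeDegLE M k 0 := by
  induction M with
  | zero => intro k; trivial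
  | succ M ih =>
    intro k
    refine ⟨0, 0, by ext; simp, ih k, ?_⟩
    rcases k with _ | l
    · exact Or.inl ⟨rfl, rfl⟩
    · exact Or.inr ⟨l, rfl, ih l⟩

lemma CubeDegLE.const {M : ℕ} (c : ℝ) : ∀ k, CubeDegLE M k (fun _ => c) := by
  induction M with
  | zero => intro k; trivial
  | succ M ih =>
    intro k
    refine ⟨fun _ => c, 0, by ext; simp, ih k, ?_⟩
    rcases k with _ | l
    · exact Or.inl ⟨rfl, rfl⟩
    · exact Or.inr ⟨l, rfl, CubeDegLE.zero l⟩

lemma CubeDegLE.succ {M : ℕ} : ∀ {k : ℕ} {f : (Fin M → Bool) → ℝ},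
    CubeDegLE M k f → CubeDegLE M (k + 1) f := by
  induction M with
  | zero => intros; trivial
  | succ M ih =>
    rintro k f ⟨g, h, rfl, hg, hh⟩
    refine ⟨g, h, rfl, ih hg, Or.inr ⟨k, rfl, ?_⟩⟩
    rcases hh with ⟨rfl, rfl⟩ | ⟨l, rfl, hl⟩
    · exact CubeDegLE.zero 0
    · exact ih hl

lemma CubeDegLE.mono {M k l : ℕ} {f : (Fin M → Bool) → ℝ} (hf : CubeDegLE M k f) (hkl : k ≤ l) :
    CubeDegLE M l f := by
  induction hkl with
  | refl => exact hf
  | step _ ih => exact ih.succ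

lemma CubeDegLE.add {M : ℕ} : ∀ {k : ℕ} {f g : (Fin M → Bool) → ℝ},
    CubeDegLE M k f → CubeDegLE M k g → CubeDegLE M k (fun s => f s + g s) := by
  induction M with
  | zero => intros; trivial
  | succ M ih =>
    rintro k _ _ ⟨g, h, rfl, hg, hh⟩ ⟨g', h', rfl, hg', hh'⟩
    refine ⟨fun s => g s + g' s, fun s => h s + h' s, by ext s; ring, ih hg hg', ?_⟩
    rcases hh with ⟨rfl, rfl⟩ | ⟨l, rfl, hl⟩
    · rcases hh' with ⟨_, rfl⟩ | ⟨l', h, _⟩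
      · exact Or.inl ⟨rfl, by ext; simp⟩
      · omega
    · rcases hh' with ⟨h, _⟩ | ⟨l', h, hl'⟩
      · omega
      · obtain rfl : l = l' := by omega
        exact Or.inr ⟨l, rfl, ih hl hl'⟩

lemma CubeDegLE.mul {M : ℕ} : ∀ {k l : ℕ} {f g : (Fin M → Bool) → ℝ},
    CubeDegLE M k f → CubeDegLE M l g → CubeDegLE M (k + l) (fun s => f s * g s) := by
  induction M with
  | zero => intros; trivial
  | succ M ih =>
    rintro k l _ _ ⟨g, h, rfl, hg, hh⟩ ⟨g', h', rfl, hg', hh'⟩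
    have hz : ∀ (j : ℕ) (f : (Fin M → Bool) → ℝ),
        CubeDegLE M j (fun s => f s * (0 : (Fin M → Bool) → ℝ) s) := by
      intro j f; simpa using CubeDegLE.const (M := M) 0 j
    have hz' : ∀ (j : ℕ) (f : (Fin M → Bool) → ℝ),
        CubeDegLE M j (fun s => (0 : (Fin M → Bool) → ℝ) s * f s) := by
      intro j f; simpa using CubeDegLE.const (M := M) 0 j
    refine ⟨fun s => g s * g' s + h s * h' s, fun s => g s * h' s + h s * g' s, ?_, ?_, ?_⟩
    · ext s
      linear_combination (h (Fin.tail s) * h' (Fin.tail s)) * boolSign_mul_self (s 0)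
    · refine (ih hg hg').add ?_
      rcases hh with ⟨rfl, rfl⟩ | ⟨i, rfl, hi⟩
      · exact hz' _ _
      rcases hh' with ⟨rfl, rfl⟩ | ⟨j, rfl, hj⟩
      · exact hz _ _
      exact (ih hi hj).mono (by omega)
    · rcases hh with ⟨rfl, rfl⟩ | ⟨i, rfl, hi⟩
      · rcases hh' with ⟨rfl, rfl⟩ | ⟨j, rfl, hj⟩
        · exact Or.inl ⟨rfl, by ext; simp⟩
        · exact Or.inr ⟨j, by omega, by simpa using! (ih hg hj).add (hz' (0 + j) g')⟩
      · rcases hh' with ⟨rfl, rfl⟩ | ⟨j, rfl, hj⟩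
        · exact Or.inr ⟨i, by omega, by simpa using! (hz (i + 0) g).add (ih hi hg')⟩
        · exact Or.inr ⟨i + 1 + j, by omega, (ih hg hj).add ((ih hi hg').mono (by omega))⟩

/-- The hypercontractive inequality between second and fourth moments. -/
lemma CubeDegLE.cubeAvg_pow_four_le {M : ℕ} : ∀ {k : ℕ} {f : (Fin M → Bool) → ℝ},
    CubeDegLE M k f → cubeAvg (fun s => f s ^ 4) ≤ 9 ^ k * cubeAvg (fun s => f s ^ 2) ^ 2 := by
  induction M with
  | zero =>
    intro k f _
    simp only [cubeAvg_zero_dim]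
    have : (1 : ℝ) ≤ 9 ^ k := one_le_pow₀ (by norm_num)
    nlinarith [sq_nonneg (f default ^ 2)]
  | succ M ih =>
    rintro k _ ⟨g, h, rfl, hg, hh⟩
    rw [cubeAvg_sign_split g h (fun x => x ^ 4), cubeAvg_sign_split g h (fun x => x ^ 2)]
    have e4 : cubeAvg (fun s => ((g s + h s) ^ 4 + (g s - h s) ^ 4) / 2)
        = cubeAvg (fun s => g s ^ 4) + (6 * cubeAvg (fun s => g s ^ 2 * h s ^ 2)
          + cubeAvg (fun s => h s ^ 4)) := by
      rw [← cubeAvg_const_mul, ← cubeAvg_add, ← cubeAvg_add]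
      congr 1; ext s; ring
    have e2 : cubeAvg (fun s => ((g s + h s) ^ 2 + (g s - h s) ^ 2) / 2)
        = cubeAvg (fun s => g s ^ 2) + cubeAvg (fun s => h s ^ 2) := by
      rw [← cubeAvg_add]
      congr 1; ext s; ring
    rw [e4, e2]
    have hG := ih hg
    set G := cubeAvg (fun s => g s ^ 2) with hGdef
    have hG0 : 0 ≤ G := cubeAvg_nonneg fun s => sq_nonneg _
    rcases hh with ⟨rfl, rfl⟩ | ⟨l, rfl, hl⟩
    · simp only [Pi.zero_apply]
      norm_num [cubeAvg_const] at hG ⊢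
      exact hG
    · have hH := ih hl
      set H := cubeAvg (fun s => h s ^ 2) with hHdef
      have hH0 : 0 ≤ H := cubeAvg_nonneg fun s => sq_nonneg _
      have hcs := cubeAvg_mul_sq_le (fun s => g s ^ 2) (fun s => h s ^ 2)
      simp only [← pow_mul] at hcs
      norm_num at hcs
      have hp : (0 : ℝ) < 9 ^ l := by positivity
      have hx : cubeAvg (fun s => g s ^ 2 * h s ^ 2) ≤ 3 * 9 ^ l * (G * H) := by
        apply le_of_sq_le_sq _ (by positivity)
        calc _ ≤ _ := hcs
          _ ≤ (9 ^ (l + 1) * G ^ 2) * (9 ^ l * H ^ 2) := by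
            gcongr
            exact cubeAvg_nonneg fun s => by positivity
          _ = _ := by ring
      rw [pow_succ] at hG ⊢
      nlinarith [mul_nonneg hp.le (sq_nonneg H)]

/-- The off-diagonal quadratic form of a real matrix in random signs. -/
def signForm {M : ℕ} (G : Matrix (Fin M) (Fin M) ℝ) (s : Fin M → Bool) : ℝ :=
  ∑ i, ∑ j, boolSign (s i) * boolSign (s j) * G i j - ∑ i, G i i

/-- A Rademacher sum. -/
def signSum {M : ℕ} (c : Fin M → ℝ) (s : Fin M → Bool) : ℝ := ∑ i, boolSign (s i) * c i

lemma signSum_succ {M : ℕ} (c : Fin (M + 1) → ℝ) :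
    signSum c = fun s => signSum (Fin.tail c) (Fin.tail s) + boolSign (s 0) * c 0 := by
  ext s
  simp [signSum, Fin.sum_univ_succ, Fin.tail, add_comm]

lemma signSum_deg {M : ℕ} (c : Fin M → ℝ) : CubeDegLE M 1 (signSum c) := by
  induction M with
  | zero => trivial
  | succ M ih =>
    exact ⟨signSum (Fin.tail c), fun _ => c 0, signSum_succ c, ih _,
      Or.inr ⟨0, rfl, CubeDegLE.const _ _⟩⟩

lemma cubeAvg_signSum_sq {M : ℕ} (c : Fin M → ℝ) :
    cubeAvg (fun s => signSum c s ^ 2) = ∑ i, c i ^ 2 := by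
  induction M with
  | zero => simp [cubeAvg, signSum]
  | succ M ih =>
    rw [signSum_succ, cubeAvg_sign_split (signSum (Fin.tail c)) (fun _ => c 0) (fun x => x ^ 2)]
    have : cubeAvg (fun s => ((signSum (Fin.tail c) s + c 0) ^ 2
        + (signSum (Fin.tail c) s - c 0) ^ 2) / 2)
        = cubeAvg (fun s => signSum (Fin.tail c) s ^ 2)
          + cubeAvg (fun _ : Fin M → Bool => c 0 ^ 2) := by
      rw [← cubeAvg_add]
      congr 1; ext s; ring
    rw [this, ih, cubeAvg_const, Fin.sum_univ_succ, add_comm]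
    rfl

lemma signForm_succ {M : ℕ} (G : Matrix (Fin (M + 1)) (Fin (M + 1)) ℝ) :
    signForm G = fun s => signForm (G.submatrix Fin.succ Fin.succ) (Fin.tail s)
      + boolSign (s 0) * signSum (fun j => G 0 j.succ + G j.succ 0) (Fin.tail s) := by
  ext s
  simp only [signForm, signSum, Fin.sum_univ_succ, Fin.tail, Matrix.submatrix_apply,
    Finset.sum_add_distrib, Finset.mul_sum, mul_add]
  have e1 : ∀ x : Fin M, boolSign (s x.succ) * boolSign (s 0) * G x.succ 0
      = boolSign (s 0) * (boolSign (s x.succ) * G x.succ 0) := fun x => by ring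
  have e2 : ∀ x : Fin M, boolSign (s 0) * boolSign (s x.succ) * G 0 x.succ
      = boolSign (s 0) * (boolSign (s x.succ) * G 0 x.succ) := fun x => by ring
  simp only [e1, e2]
  linear_combination (G 0 0) * boolSign_mul_self (s 0)

lemma signForm_deg {M : ℕ} (G : Matrix (Fin M) (Fin M) ℝ) : CubeDegLE M 2 (signForm G) := by
  induction M with
  | zero => trivial
  | succ M ih =>
    exact ⟨_, _, signForm_succ G, ih _, Or.inr ⟨1, rfl, signSum_deg _⟩⟩

lemma cubeAvg_signForm {M : ℕ} (G : Matrix (Fin M) (Fin M) ℝ) : cubeAvg (signForm G) = 0 := by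
  induction M with
  | zero => simp [cubeAvg, signForm]
  | succ M ih =>
    rw [signForm_succ, cubeAvg_sign_split _ _ (fun x => x), ← ih (G.submatrix Fin.succ Fin.succ)]
    congr 1; ext s; ring

lemma cubeAvg_signForm_sq_le {M : ℕ} (G : Matrix (Fin M) (Fin M) ℝ) :
    cubeAvg (fun s => signForm G s ^ 2) ≤ 2 * ∑ i, ∑ j, G i j ^ 2 := by
  induction M with
  | zero => simp [cubeAvg, signForm]
  | succ M ih =>
    rw [signForm_succ, cubeAvg_sign_split _ _ (fun x => x ^ 2)]
    set g := signForm (G.submatrix Fin.succ Fin.succ)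
    set h := signSum (fun j : Fin M => G 0 j.succ + G j.succ 0)
    have : cubeAvg (fun s => ((g s + h s) ^ 2 + (g s - h s) ^ 2) / 2)
        = cubeAvg (fun s => g s ^ 2) + cubeAvg (fun s => h s ^ 2) := by
      rw [← cubeAvg_add]
      congr 1; ext s; ring
    rw [this, cubeAvg_signSum_sq]
    have h1 := ih (G.submatrix Fin.succ Fin.succ)
    have h2 : ∑ j : Fin M, (G 0 j.succ + G j.succ 0) ^ 2
        ≤ 2 * (∑ j : Fin M, G 0 j.succ ^ 2 + ∑ j : Fin M, G j.succ 0 ^ 2) := by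
      rw [← Finset.sum_add_distrib, Finset.mul_sum]
      refine Finset.sum_le_sum fun j _ => ?_
      nlinarith [sq_nonneg (G 0 j.succ - G j.succ 0)]
    simp only [Fin.sum_univ_succ, Finset.sum_add_distrib]
    simp only [Matrix.submatrix_apply] at h1
    nlinarith [sq_nonneg (G 0 0)]

lemma cubeAvg_signForm_pow_eight_le {M : ℕ} (G : Matrix (Fin M) (Fin M) ℝ) :
    cubeAvg (fun s => signForm G s ^ 8) ≤ 9 ^ 8 * (2 * ∑ i, ∑ j, G i j ^ 2) ^ 4 := by
  have h4 := (signForm_deg G).cubeAvg_pow_four_le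
  have h8 := ((signForm_deg G).mul (signForm_deg G)).cubeAvg_pow_four_le
  have e8 : (fun s => (signForm G s * signForm G s) ^ 4) = fun s => signForm G s ^ 8 := by
    ext s; ring
  have e4 : (fun s => (signForm G s * signForm G s) ^ 2) = fun s => signForm G s ^ 4 := by
    ext s; ring
  rw [e8, e4] at h8
  have h2 := cubeAvg_signForm_sq_le G
  have h20 : 0 ≤ cubeAvg (fun s => signForm G s ^ 2) := cubeAvg_nonneg fun s => sq_nonneg _
  have h40 : 0 ≤ cubeAvg (fun s => signForm G s ^ 4) := cubeAvg_nonneg fun s => by positivity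
  calc _ ≤ _ := h8
    _ ≤ 9 ^ (2 + 2) * (9 ^ 2 * (2 * ∑ i, ∑ j, G i j ^ 2) ^ 2) ^ 2 := by
      gcongr
      exact h4.trans (by gcongr)
    _ = _ := by ring

/-! ### Functions of a Hermitian matrix and quadratic forms -/

section ConjDiag

variable {ι : Type*} [Fintype ι] [DecidableEq ι]

/-- The matrix `V diag(f) Vᴴ`. -/
def conjDiag (V : Matrix ι ι ℂ) (f : ι → ℝ) : Matrix ι ι ℂ :=
  V * diagonal (fun i => (f i : ℂ)) * Vᴴ

/-- The quadratic form `v* H v`, as a real number. -/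
def quadRe {κ : Type*} [Fintype κ] (H : Matrix κ κ ℂ) (v : κ → ℂ) : ℝ :=
  (star v ⬝ᵥ (H *ᵥ v)).re

lemma conjDiag_mul {V : Matrix ι ι ℂ} (hV : Vᴴ * V = 1) (f g : ι → ℝ) :
    conjDiag V f * conjDiag V g = conjDiag V (fun i => f i * g i) := by
  have : diagonal (fun i => ((f i * g i : ℝ) : ℂ))
      = diagonal (fun i => (f i : ℂ)) * diagonal (fun i => (g i : ℂ)) := by
    simp [diagonal_mul_diagonal]
  unfold conjDiag
  rw [this]
  calc _ = V * diagonal (fun i => (f i : ℂ)) * (Vᴴ * V) * diagonal (fun i => (g i : ℂ)) * Vᴴ := by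
        simp only [Matrix.mul_assoc]
    _ = _ := by rw [hV, Matrix.mul_one]; simp only [Matrix.mul_assoc]

lemma conjDiag_one {V : Matrix ι ι ℂ} (hV' : V * Vᴴ = 1) : conjDiag V (fun _ => 1) = 1 := by
  simp [conjDiag, hV']

lemma conjDiag_pow {V : Matrix ι ι ℂ} (hV : Vᴴ * V = 1) (hV' : V * Vᴴ = 1) (f : ι → ℝ) (q : ℕ) :
    conjDiag V f ^ q = conjDiag V (fun i => f i ^ q) := by
  induction q with
  | zero => simp [conjDiag_one hV']
  | succ q ih => rw [pow_succ, ih, conjDiag_mul hV]; simp only [pow_succ]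

lemma conjDiag_trace {V : Matrix ι ι ℂ} (hV : Vᴴ * V = 1) (f : ι → ℝ) :
    (conjDiag V f).trace = ((∑ i, f i : ℝ) : ℂ) := by
  rw [conjDiag, Matrix.trace_mul_comm, ← Matrix.mul_assoc, hV, Matrix.one_mul, trace_diagonal]
  simp

lemma conjDiag_sub {V : Matrix ι ι ℂ} (hV' : V * Vᴴ = 1) (z : ℝ) (f : ι → ℝ) :
    (z : ℂ) • (1 : Matrix ι ι ℂ) - conjDiag V f = conjDiag V (fun i => z - f i) := by
  have : diagonal (fun i => ((z - f i : ℝ) : ℂ))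
      = (z : ℂ) • (1 : Matrix ι ι ℂ) - diagonal (fun i => (f i : ℂ)) := by
    ext i j
    by_cases h : i = j <;> simp [h]
  simp only [conjDiag, this, Matrix.mul_sub, Matrix.sub_mul]
  simp [hV']

lemma conjDiag_inv {V : Matrix ι ι ℂ} (hV : Vᴴ * V = 1) (hV' : V * Vᴴ = 1) {f : ι → ℝ}
    (hf : ∀ i, f i ≠ 0) : (conjDiag V f)⁻¹ = conjDiag V (fun i => (f i)⁻¹) := by
  apply Matrix.inv_eq_right_inv
  rw [conjDiag_mul hV, ← conjDiag_one hV']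
  congr 1; ext i
  exact mul_inv_cancel₀ (hf i)

lemma conjDiag_dotProduct (V : Matrix ι ι ℂ) (f : ι → ℝ) (v : ι → ℂ) :
    star v ⬝ᵥ (conjDiag V f *ᵥ v) = ((∑ i, f i * Complex.normSq ((Vᴴ *ᵥ v) i) : ℝ) : ℂ) := by
  have h : star v ⬝ᵥ (conjDiag V f *ᵥ v)
      = star (Vᴴ *ᵥ v) ⬝ᵥ (diagonal (fun i => (f i : ℂ)) *ᵥ (Vᴴ *ᵥ v)) := by
    rw [conjDiag, star_mulVec, conjTranspose_conjTranspose, ← dotProduct_mulVec,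
      Matrix.mulVec_mulVec, Matrix.mulVec_mulVec]
  rw [h]
  simp only [dotProduct, mulVec_diagonal, Pi.star_apply]
  push_cast
  refine Finset.sum_congr rfl fun i _ => ?_
  rw [Complex.normSq_eq_conj_mul_self]
  simp only [RCLike.star_def]
  ring

lemma quadRe_conjDiag (V : Matrix ι ι ℂ) (f : ι → ℝ) (v : ι → ℂ) :
    quadRe (conjDiag V f) v = ∑ i, f i * Complex.normSq ((Vᴴ *ᵥ v) i) := by
  rw [quadRe, conjDiag_dotProduct, Complex.ofReal_re]

lemma sum_normSq_conjTranspose_mulVec {V : Matrix ι ι ℂ} (hV' : V * Vᴴ = 1) (v : ι → ℂ) :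
    ((∑ i, Complex.normSq ((Vᴴ *ᵥ v) i) : ℝ) : ℂ) = star v ⬝ᵥ v := by
  have := conjDiag_dotProduct V (fun _ => 1) v
  rw [conjDiag_one hV'] at this
  simpa using this.symm

lemma conjDiag_conjTranspose (V : Matrix ι ι ℂ) (f : ι → ℝ) : (conjDiag V f)ᴴ = conjDiag V f := by
  simp only [conjDiag, conjTranspose_mul, conjTranspose_conjTranspose, diagonal_conjTranspose,
    Matrix.mul_assoc]
  congr 3
  ext i; simp

lemma conjDiag_posSemidef (V : Matrix ι ι ℂ) {f : ι → ℝ} (hf : ∀ i, 0 ≤ f i) :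
    (conjDiag V f).PosSemidef := by
  refine PosSemidef.of_dotProduct_mulVec_nonneg (conjDiag_conjTranspose V f) fun v => ?_
  rw [conjDiag_dotProduct]
  exact_mod_cast Finset.sum_nonneg fun i _ => mul_nonneg (hf i) (Complex.normSq_nonneg _)

lemma conjDiag_posDef {V : Matrix ι ι ℂ} (hV : Vᴴ * V = 1) (hV' : V * Vᴴ = 1) {f : ι → ℝ}
    (hf : ∀ i, 0 < f i) : (conjDiag V f).PosDef := by
  rw [(conjDiag_posSemidef V fun i => (hf i).le).posDef_iff_isUnit]
  have h : conjDiag V f * conjDiag V (fun i => (f i)⁻¹) = 1 := by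
    rw [conjDiag_mul hV, ← conjDiag_one hV']
    congr 1; ext i; exact mul_inv_cancel₀ (hf i).ne'
  exact IsUnit.of_mul_eq_one _ h

lemma dotProduct_col_conjDiag {V : Matrix ι ι ℂ} (hV : Vᴴ * V = 1) (f : ι → ℝ) (i : ι) :
    quadRe (conjDiag V f) (V *ᵥ Pi.single i 1) = f i := by
  rw [quadRe_conjDiag, Matrix.mulVec_mulVec, hV, Matrix.one_mulVec]
  rw [Finset.sum_eq_single i]
  · simp
  · intro j _ hj; simp [hj]
  · simp

lemma nonneg_of_conjDiag_posSemidef {V : Matrix ι ι ℂ} (hV : Vᴴ * V = 1) {f : ι → ℝ}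
    (h : (conjDiag V f).PosSemidef) (i : ι) : 0 ≤ f i := by
  rw [← dotProduct_col_conjDiag hV f i]
  exact (Complex.nonneg_iff.mp (h.dotProduct_mulVec_nonneg _)).1

lemma pos_of_conjDiag_posDef {V : Matrix ι ι ℂ} (hV : Vᴴ * V = 1) {f : ι → ℝ}
    (h : (conjDiag V f).PosDef) (i : ι) : 0 < f i := by
  rw [← dotProduct_col_conjDiag hV f i]
  refine (Complex.pos_iff.mp (h.dotProduct_mulVec_pos ?_)).1
  intro h0
  have : Vᴴ *ᵥ (V *ᵥ Pi.single i 1) = (Pi.single i 1 : ι → ℂ) := by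
    rw [Matrix.mulVec_mulVec, hV, Matrix.one_mulVec]
  rw [h0, mulVec_zero] at this
  simpa using congrFun this i

lemma exists_eq_conjDiag {X : Matrix ι ι ℂ} (hX : X.IsHermitian) :
    ∃ (V : Matrix ι ι ℂ) (f : ι → ℝ), Vᴴ * V = 1 ∧ V * Vᴴ = 1 ∧ X = conjDiag V f := by
  refine ⟨hX.eigenvectorUnitary, hX.eigenvalues, ?_, ?_, ?_⟩
  · exact (Matrix.mem_unitaryGroup_iff').mp hX.eigenvectorUnitary.2
  · exact (Matrix.mem_unitaryGroup_iff).mp hX.eigenvectorUnitary.2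
  · have := hX.spectral_theorem
    simpa [conjDiag, Unitary.conjStarAlgAut_apply, Function.comp_def,
      star_eq_conjTranspose] using this

end ConjDiag

/-- The random unit vector with entries `± 1 / √k`. -/
def signVec {k : ℕ} (s : Fin k → Bool) : Fin k → ℂ := fun i => ((boolSign (s i) / √k : ℝ) : ℂ)

lemma signVec_norm {k : ℕ} (hk : 0 < k) (s : Fin k → Bool) :
    star (signVec s) ⬝ᵥ signVec s = 1 := by
  have hk' : (0 : ℝ) < k := by exact_mod_cast hk
  have h : ∀ i, star (signVec s i) * signVec s i = ((1 / k : ℝ) : ℂ) := by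
    intro i
    simp only [signVec, RCLike.star_def, Complex.conj_ofReal]
    rw [← Complex.ofReal_mul, div_mul_div_comm, boolSign_mul_self, Real.mul_self_sqrt hk'.le]
  simp only [dotProduct, Pi.star_apply, h]
  simp [hk.ne']

lemma quadRe_signVec {k : ℕ} (H : Matrix (Fin k) (Fin k) ℂ) (s : Fin k → Bool) :
    quadRe H (signVec s) = H.trace.re / k + signForm (H.map Complex.re) s / k := by
  have hk' : (0 : ℝ) ≤ k := by positivity
  have h : ∀ i j, (star (signVec s i) * (H i j * signVec s j)).re
      = boolSign (s i) * boolSign (s j) * (H i j).re / k := by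
    intro i j
    simp only [signVec, RCLike.star_def, Complex.conj_ofReal]
    rw [Complex.re_ofReal_mul, Complex.re_mul_ofReal, ← Real.mul_self_sqrt hk']
    simp only [Real.sqrt_mul_self (Real.sqrt_nonneg _)]
    field_simp
  simp only [quadRe, dotProduct, mulVec, Pi.star_apply, Complex.re_sum, Finset.mul_sum, h]
  simp only [signForm, Matrix.trace, diag_apply, Complex.re_sum, map_apply, ← Finset.sum_div]
  ring

lemma cubeAvg_quadRe_signVec {k : ℕ} (H : Matrix (Fin k) (Fin k) ℂ) :
    cubeAvg (fun s => quadRe H (signVec s)) = H.trace.re / k := by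
  have : (fun s => quadRe H (signVec s))
      = fun s => H.trace.re / k + (k : ℝ)⁻¹ * signForm (H.map Complex.re) s := by
    ext s; rw [quadRe_signVec, div_eq_inv_mul (signForm _ _)]
  rw [this, cubeAvg_add, cubeAvg_const, cubeAvg_const_mul, cubeAvg_signForm, mul_zero, add_zero]

lemma sum_re_sq_le_trace_sq {ι : Type*} [Fintype ι] {H : Matrix ι ι ℂ} (hH : Hᴴ = H) :
    ∑ i, ∑ j, (H i j).re ^ 2 ≤ (H * H).trace.re := by
  simp only [Matrix.trace, diag_apply, Matrix.mul_apply, Complex.re_sum]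
  refine Finset.sum_le_sum fun i _ => Finset.sum_le_sum fun j _ => ?_
  have : H j i = star (H i j) := by rw [← conjTranspose_apply, hH]
  rw [this, RCLike.star_def, Complex.mul_conj, Complex.ofReal_re, Complex.normSq_apply]
  nlinarith [sq_nonneg (H i j).im]

lemma cubeAvg_quadRe_deviation {k : ℕ} {H : Matrix (Fin k) (Fin k) ℂ} (hH : Hᴴ = H) :
    cubeAvg (fun s => (quadRe H (signVec s) - H.trace.re / k) ^ 8)
      ≤ 9 ^ 8 * (2 * (H * H).trace.re) ^ 4 / k ^ 8 := by
  have : (fun s => (quadRe H (signVec s) - H.trace.re / k) ^ 8)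
      = fun s => ((k : ℝ) ^ 8)⁻¹ * signForm (H.map Complex.re) s ^ 8 := by
    ext s; rw [quadRe_signVec]; ring
  rw [this, cubeAvg_const_mul, div_eq_inv_mul]
  have h1 := cubeAvg_signForm_pow_eight_le (H.map Complex.re)
  have h2 := sum_re_sq_le_trace_sq hH
  simp only [map_apply] at h1
  refine mul_le_mul_of_nonneg_left (h1.trans ?_) (by positivity)
  have h0 : 0 ≤ ∑ i, ∑ j, (H i j).re ^ 2 := by positivity
  gcongr

/-! ### Rank-one perturbations and compressions -/

/-- Chebyshev's sum inequality for weighted power sums. -/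
lemma weighted_power_sum_mul_le {ι : Type*} [Fintype ι] {w r : ι → ℝ} (hw : ∀ i, 0 ≤ w i)
    (hr : ∀ i, 0 ≤ r i) (a b : ℕ) :
    (∑ i, r i ^ a * w i) * (∑ i, r i ^ b * w i) ≤ (∑ i, w i) * ∑ i, r i ^ (a + b) * w i := by
  have key : ∀ i j, r i ^ a * r j ^ b + r j ^ a * r i ^ b ≤ r i ^ (a + b) + r j ^ (a + b) := by
    intro i j
    rcases le_total (r i) (r j) with h | h
    · have h1 := pow_le_pow_left₀ (hr i) h a
      have h2 := pow_le_pow_left₀ (hr i) h b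
      rw [pow_add, pow_add]
      nlinarith
    · have h1 := pow_le_pow_left₀ (hr j) h a
      have h2 := pow_le_pow_left₀ (hr j) h b
      rw [pow_add, pow_add]
      nlinarith
  have e1 : 2 * ((∑ i, r i ^ a * w i) * (∑ i, r i ^ b * w i))
      = ∑ i, ∑ j, w i * w j * (r i ^ a * r j ^ b + r j ^ a * r i ^ b) := by
    have : (∑ i, r i ^ a * w i) * (∑ i, r i ^ b * w i)
      = (∑ i, r i ^ b * w i) * (∑ i, r i ^ a * w i) := mul_comm _ _
    rw [two_mul]
    nth_rewrite 2 [this]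
    rw [Finset.sum_mul_sum, Finset.sum_mul_sum, ← Finset.sum_add_distrib]
    refine Finset.sum_congr rfl fun i _ => ?_
    rw [← Finset.sum_add_distrib]
    refine Finset.sum_congr rfl fun j _ => by ring
  have e2 : 2 * ((∑ i, w i) * ∑ i, r i ^ (a + b) * w i)
      = ∑ i, ∑ j, w i * w j * (r i ^ (a + b) + r j ^ (a + b)) := by
    have : (∑ i, w i) * (∑ i, r i ^ (a + b) * w i)
      = (∑ i, r i ^ (a + b) * w i) * (∑ i, w i) := mul_comm _ _
    rw [two_mul]
    nth_rewrite 2 [this]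
    rw [Finset.sum_mul_sum, Finset.sum_mul_sum, ← Finset.sum_add_distrib]
    refine Finset.sum_congr rfl fun i _ => ?_
    rw [← Finset.sum_add_distrib]
    refine Finset.sum_congr rfl fun j _ => by ring
  have : ∑ i, ∑ j, w i * w j * (r i ^ a * r j ^ b + r j ^ a * r i ^ b)
      ≤ ∑ i, ∑ j, w i * w j * (r i ^ (a + b) + r j ^ (a + b)) :=
    Finset.sum_le_sum fun i _ => Finset.sum_le_sum fun j _ =>
      mul_le_mul_of_nonneg_left (key i j) (mul_nonneg (hw i) (hw j))
  linarith

section RankOne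

variable {ι : Type*} [Fintype ι] [DecidableEq ι]

lemma rankOne_mixed_lower {R S : Matrix ι ι ℂ} {y : ι → ℂ} (hS : S = R - vecMulVec y (star y))
    (hpos : S.PosSemidef) {α : ℕ → ℝ} (hα : ∀ i, star y ⬝ᵥ (R ^ i *ᵥ y) = (α i : ℂ))
    (hα0 : ∀ i, 0 ≤ α i) (hch : ∀ a b, α a * α b ≤ α 0 * α (a + b)) (m : ℕ) :
    ∀ i, (star y ⬝ᵥ ((S ^ m * R ^ i) *ᵥ y)).re ≤ α (m + i) ∧
      α (m + i) - m * (α 0 * α (m + i - 1)) ≤ (star y ⬝ᵥ ((S ^ m * R ^ i) *ᵥ y)).re := by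
  induction m with
  | zero => intro i; simp [hα]
  | succ m ih =>
    intro i
    have hrec : (star y ⬝ᵥ ((S ^ (m + 1) * R ^ i) *ᵥ y))
        = (star y ⬝ᵥ ((S ^ m * R ^ (i + 1)) *ᵥ y)) - (star y ⬝ᵥ (S ^ m *ᵥ y)) * (α i : ℂ) := by
      rw [pow_succ, Matrix.mul_assoc, hS, Matrix.sub_mul, Matrix.mul_sub, ← hS, pow_succ',
        Matrix.sub_mulVec, dotProduct_sub, ← hα i]
      congr 1
      rw [← Matrix.mulVec_mulVec, ← Matrix.mulVec_mulVec, vecMulVec_mulVec]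
      simp [mulVec_smul, dotProduct_smul, mul_comm]
    have hb0 : 0 ≤ (star y ⬝ᵥ (S ^ m *ᵥ y)).re :=
      (Complex.nonneg_iff.mp ((hpos.pow m).dotProduct_mulVec_nonneg y)).1
    have hb1 : (star y ⬝ᵥ (S ^ m *ᵥ y)).re ≤ α m := by simpa using (ih 0).1
    rw [hrec, Complex.sub_re, Complex.re_mul_ofReal]
    obtain ⟨h1, h2⟩ := ih (i + 1)
    have e1 : m + (i + 1) = m + 1 + i := by ring
    have e2 : m + 1 + i - 1 = m + i := by omega
    rw [e1] at h1 h2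
    rw [e2] at h2 ⊢
    have h3 := hch m i
    have h4 : (star y ⬝ᵥ (S ^ m *ᵥ y)).re * α i ≤ α m * α i :=
      mul_le_mul_of_nonneg_right hb1 (hα0 i)
    have h5 := mul_nonneg hb0 (hα0 i)
    push_cast
    constructor <;> nlinarith

/-- Second-order bound for the trace of a power under a rank-one downdate. -/
lemma rankOne_trace_pow_le {R S : Matrix ι ι ℂ} {y : ι → ℂ} (hS : S = R - vecMulVec y (star y))
    (hR : Rᴴ = R)
    (hpos : S.PosSemidef) {α : ℕ → ℝ} (hα : ∀ i, star y ⬝ᵥ (R ^ i *ᵥ y) = (α i : ℂ))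
    (hα0 : ∀ i, 0 ≤ α i) (hch : ∀ a b, α a * α b ≤ α 0 * α (a + b)) (p : ℕ) :
    (S ^ p).trace.re ≤ (R ^ p).trace.re - p * α (p - 1)
      + (p * (p - 1) / 2 : ℝ) * (α 0 * α (p - 2)) := by
  have hstep : ∀ m i, ((S ^ m * R ^ (i + 1)).trace).re - ((S ^ (m + 1) * R ^ i).trace).re
      = (star y ⬝ᵥ ((S ^ m * R ^ i) *ᵥ y)).re := by
    intro m i
    have hSh : Sᴴ = S := hpos.1
    rw [← Complex.sub_re, ← Matrix.trace_sub, pow_succ' R, pow_succ S, Matrix.mul_assoc,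
      ← Matrix.mul_sub, ← Matrix.sub_mul]
    have : R - S = vecMulVec y (star y) := by rw [hS]; abel
    rw [this]
    have e : (S ^ m * (vecMulVec y (star y) * R ^ i)).trace
        = star y ⬝ᵥ ((R ^ i * S ^ m) *ᵥ y) := by
      rw [← Matrix.mul_assoc, Matrix.trace_mul_comm, ← Matrix.mul_assoc, mul_vecMulVec,
        trace_vecMulVec, dotProduct_comm]
    rw [e]
    have e2 : star y ⬝ᵥ ((R ^ i * S ^ m) *ᵥ y) = star (star y ⬝ᵥ ((S ^ m * R ^ i) *ᵥ y)) := by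
      rw [star_dotProduct, star_mulVec, conjTranspose_mul,
        conjTranspose_pow, conjTranspose_pow, hR, hSh, ← dotProduct_mulVec]
    rw [e2]; simp
  have hsum : ∀ q, ∀ i, ((S ^ q * R ^ i).trace).re ≤ (R ^ (q + i)).trace.re - q * α (q + i - 1)
      + (q * (q - 1) / 2 : ℝ) * (α 0 * α (q + i - 2)) := by
    intro q
    induction q with
    | zero => intro i; simp
    | succ q ih =>
      intro i
      have h1 := ih (i + 1)
      have h2 := hstep q i
      have h3 := (rankOne_mixed_lower hS hpos hα hα0 hch q i).2
      have e1 : q + (i + 1) = q + 1 + i := by ring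
      have e2 : q + 1 + i - 1 = q + i := by omega
      have e3 : q + 1 + i - 2 = q + i - 1 := by omega
      rw [e1] at h1
      rw [e2, e3] at h1 ⊢
      push_cast
      nlinarith
  simpa using hsum p 0

end RankOne

section Schur

variable {ι κ : Type*} [Fintype ι] [DecidableEq ι] [Fintype κ] [DecidableEq κ]

/-- The Schur complement formula: the resolvent of a compression to the orthogonal complement of a
unit vector is a rank-one downdate. -/
lemma compression_inv {M R : Matrix ι ι ℂ} {J : Matrix ι κ ℂ} {v : ι → ℂ} (hJ : Jᴴ * J = 1)
    (hJv : J * Jᴴ + vecMulVec v (star v) = 1) (hv : star v ⬝ᵥ v = 1) (hMR : M * R = 1)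
    (hR : Rᴴ = R) {c : ℝ} (hc : 0 < c) (hcv : star v ⬝ᵥ (R *ᵥ v) = (c : ℂ))
    {y : ι → ℂ} (hy : y = ((√c)⁻¹ : ℂ) • (R *ᵥ v)) :
    (Jᴴ * M * J)⁻¹ = Jᴴ * (R - vecMulVec y (star y)) * J ∧
      R - vecMulVec y (star y) = J * (Jᴴ * M * J)⁻¹ * Jᴴ ∧
      ∀ q, 0 < q → (((Jᴴ * M * J)⁻¹) ^ q).trace = ((R - vecMulVec y (star y)) ^ q).trace := by
  set S := R - vecMulVec y (star y) with hS
  have hcC : (c : ℂ) ≠ 0 := by exact_mod_cast hc.ne'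
  have hyy : vecMulVec y (star y) = (c : ℂ)⁻¹ • vecMulVec (R *ᵥ v) (star (R *ᵥ v)) := by
    rw [hy, star_smul, smul_vecMulVec, vecMulVec_smul, smul_smul]
    congr 1
    have : (√c : ℂ) * √c = c := by
      exact_mod_cast Real.mul_self_sqrt hc.le
    simp only [star_inv₀, RCLike.star_def, Complex.conj_ofReal]
    rw [← mul_inv, this]
  have hJv0 : Jᴴ *ᵥ v = 0 := by
    have h1 : (J * Jᴴ) *ᵥ v = 0 := by
      have h2 := congrArg (fun A => A *ᵥ v) hJv
      simp only [add_mulVec, vecMulVec_mulVec, hv, one_mulVec] at h2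
      simpa using h2
    calc Jᴴ *ᵥ v = (Jᴴ * J * Jᴴ) *ᵥ v := by rw [hJ, Matrix.one_mul]
      _ = Jᴴ *ᵥ ((J * Jᴴ) *ᵥ v) := by rw [Matrix.mulVec_mulVec, Matrix.mul_assoc]
      _ = 0 := by rw [h1, mulVec_zero]
  have hSv : S *ᵥ v = 0 := by
    have h : star (R *ᵥ v) ⬝ᵥ v = (c : ℂ) := by
      rw [star_mulVec, hR, ← dotProduct_mulVec, hcv]
    rw [hS, sub_mulVec, hyy, smul_mulVec, vecMulVec_mulVec, h, op_smul_eq_smul, smul_smul,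
      inv_mul_cancel₀ hcC, one_smul, sub_self]
  have hSh : Sᴴ = S := by
    rw [hS, conjTranspose_sub, hR, conjTranspose_vecMulVec, star_star]
  have hvS : star v ᵥ* S = 0 := by
    have := congrArg star hSv
    rw [star_mulVec, hSh, star_zero] at this
    exact this
  have hPS : J * Jᴴ * S = S := by
    have : J * Jᴴ = 1 - vecMulVec v (star v) := by rw [← hJv]; abel
    rw [this, Matrix.sub_mul, Matrix.one_mul, vecMulVec_mul, hvS]
    simp
  have hSP : S * (J * Jᴴ) = S := by
    have : J * Jᴴ = 1 - vecMulVec v (star v) := by rw [← hJv]; abel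
    rw [this, Matrix.mul_sub, Matrix.mul_one, mul_vecMulVec, hSv]
    simp
  have hMS : Jᴴ * (M * S) * J = 1 := by
    have hMS' : M * S = 1 - (c : ℂ)⁻¹ • vecMulVec v (star (R *ᵥ v)) := by
      rw [hS, Matrix.mul_sub, hMR, hyy, Matrix.mul_smul, mul_vecMulVec, Matrix.mulVec_mulVec, hMR,
        one_mulVec]
    rw [hMS', Matrix.mul_sub, Matrix.sub_mul, Matrix.mul_one, hJ, Matrix.mul_smul,
      mul_vecMulVec, hJv0]
    simp
  have hinv : (Jᴴ * M * J)⁻¹ = Jᴴ * S * J := by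
    apply Matrix.inv_eq_right_inv
    calc Jᴴ * M * J * (Jᴴ * S * J) = Jᴴ * (M * (J * Jᴴ * S)) * J := by
          simp only [Matrix.mul_assoc]
      _ = 1 := by rw [hPS, hMS]
  have hpow : ∀ q, (Jᴴ * S * J) ^ (q + 1) = Jᴴ * S ^ (q + 1) * J := by
    intro q
    induction q with
    | zero => simp
    | succ q ih =>
      rw [pow_succ, ih]
      calc Jᴴ * S ^ (q + 1) * J * (Jᴴ * S * J) = Jᴴ * (S ^ (q + 1) * (J * Jᴴ * S)) * J := by
            simp only [Matrix.mul_assoc]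
        _ = _ := by rw [hPS, ← pow_succ]
  refine ⟨hinv, ?_, ?_⟩
  · rw [hinv]
    calc S = J * Jᴴ * S * (J * Jᴴ) := by rw [hPS, hSP]
      _ = _ := by simp only [Matrix.mul_assoc]
  · intro q hq
    obtain ⟨q, rfl⟩ : ∃ q', q = q' + 1 := ⟨q - 1, by omega⟩
    rw [hinv, hpow, Matrix.trace_mul_comm, ← Matrix.mul_assoc, pow_succ', ← Matrix.mul_assoc, hPS]

end Schur

/-! ### Passing to a corner of a rotated matrix -/

lemma exists_unitary_col {ι : Type*} [Fintype ι] [DecidableEq ι] {v : ι → ℂ}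
    (hv : star v ⬝ᵥ v = 1) (i₀ : ι) :
    ∃ U : Matrix ι ι ℂ, Uᴴ * U = 1 ∧ U * Uᴴ = 1 ∧ ∀ i, U i i₀ = v i := by
  have hinner : ∀ x y : EuclideanSpace ℂ ι, inner ℂ x y = ∑ i, star (x i) * y i := by
    intro x y
    simp [PiLp.inner_apply, mul_comm]
  have hon : Orthonormal ℂ (Set.domRestrict {i₀}
      (fun _ : ι => (WithLp.toLp 2 v : EuclideanSpace ℂ ι))) := by
    rw [orthonormal_iff_ite]
    intro i j
    rw [if_pos (Subsingleton.elim _ _)]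
    rw [hinner]
    exact hv
  obtain ⟨b, hb⟩ := hon.exists_orthonormalBasis_extension_of_card_eq (by simp)
  have hU : (Matrix.of fun i j => b j i : Matrix ι ι ℂ)ᴴ * (Matrix.of fun i j => b j i) = 1 := by
    ext i j
    have := orthonormal_iff_ite.mp b.orthonormal i j
    rw [hinner] at this
    simpa [Matrix.mul_apply, Matrix.one_apply] using this
  refine ⟨_, hU, mul_eq_one_comm.mp hU, fun i => ?_⟩
  simp [hb i₀ rfl]

/-- The power sum `tr (z - X)^{-q}`. -/
def resolventPow {ι : Type*} [Fintype ι] [DecidableEq ι] (z : ℝ) (X : Matrix ι ι ℂ) (q : ℕ) : ℝ :=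
  ((((z : ℂ) • (1 : Matrix ι ι ℂ) - X)⁻¹) ^ q).trace.re

lemma resolventPow_conjDiag {ι : Type*} [Fintype ι] [DecidableEq ι] {V : Matrix ι ι ℂ}
    (hV : Vᴴ * V = 1) (hV' : V * Vᴴ = 1) {z : ℝ} {lam : ι → ℝ} (h : ∀ i, 0 < z - lam i) (q : ℕ) :
    resolventPow z (conjDiag V lam) q = ∑ i, ((z - lam i)⁻¹) ^ q := by
  rw [resolventPow, conjDiag_sub hV', conjDiag_inv hV hV' fun i => (h i).ne',
    conjDiag_pow hV hV', conjDiag_trace hV, Complex.ofReal_re]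

/-- The corner of `W X W*` obtained by deleting the last coordinate. -/
def dropLast {k : ℕ} (W X : Matrix (Fin (k + 1)) (Fin (k + 1)) ℂ) : Matrix (Fin k) (Fin k) ℂ :=
  (W * X * Wᴴ).submatrix Fin.castSucc Fin.castSucc

lemma dropLast_estimates {k : ℕ} {X W V : Matrix (Fin (k + 1)) (Fin (k + 1)) ℂ}
    {lam : Fin (k + 1) → ℝ} {v : Fin (k + 1) → ℂ} {z : ℝ}
    (hV : Vᴴ * V = 1) (hV' : V * Vᴴ = 1) (hX : X = conjDiag V lam) (hz : ∀ i, 0 < z - lam i)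
    (hW : Wᴴ * W = 1) (hW' : W * Wᴴ = 1) (hWv : ∀ i, Wᴴ i (Fin.last k) = v i)
    (hv : star v ⬝ᵥ v = 1) {f : ℕ → ℝ}
    (hf : ∀ q, f q = ∑ i, ((z - lam i)⁻¹) ^ q * Complex.normSq ((Vᴴ *ᵥ v) i)) :
    0 < f 1 ∧ ((z : ℂ) • (1 : Matrix (Fin k) (Fin k) ℂ) - dropLast W X).PosDef ∧
    resolventPow z (dropLast W X) 1 = ∑ i, (z - lam i)⁻¹ - f 2 / f 1 ∧
    ∀ p : ℕ, 2 ≤ p → resolventPow z (dropLast W X) p ≤ ∑ i, ((z - lam i)⁻¹) ^ p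
      - p * (f (p + 1) / f 1) + (p * (p - 1) / 2 : ℝ) * (f 2 / f 1 * (f p / f 1)) := by
  set r : Fin (k + 1) → ℝ := fun i => (z - lam i)⁻¹ with hr
  have hr0 : ∀ i, 0 < r i := fun i => inv_pos.mpr (hz i)
  set w : Fin (k + 1) → ℝ := fun i => Complex.normSq ((Vᴴ *ᵥ v) i) with hw
  have hw0 : ∀ i, 0 ≤ w i := fun i => Complex.normSq_nonneg _
  have hwsum : ∑ i, w i = 1 := by
    have := sum_normSq_conjTranspose_mulVec hV' v
    rw [hv] at this
    exact_mod_cast this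
  have hf' : ∀ q, f q = ∑ i, r i ^ q * w i := hf
  set M := (z : ℂ) • (1 : Matrix (Fin (k + 1)) (Fin (k + 1)) ℂ) - X with hM
  set R := conjDiag V r with hR
  have hMd : M = conjDiag V (fun i => z - lam i) := by rw [hM, hX, conjDiag_sub hV']
  have hMR : M * R = 1 := by
    rw [hMd, hR, conjDiag_mul hV, ← conjDiag_one hV']
    congr 1; ext i; exact mul_inv_cancel₀ (hz i).ne'
  have hRh : Rᴴ = R := conjDiag_conjTranspose V r
  have hRpow : ∀ q, R ^ q = conjDiag V (fun i => r i ^ q) := conjDiag_pow hV hV' r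
  have hquad : ∀ q, star v ⬝ᵥ (R ^ q *ᵥ v) = (f q : ℂ) := by
    intro q; rw [hRpow, conjDiag_dotProduct, hf']
  have hf0 : ∀ q, 0 ≤ f q := fun q => by
    rw [hf']; exact Finset.sum_nonneg fun i _ => mul_nonneg (pow_nonneg (hr0 i).le _) (hw0 i)
  have hf1 : 0 < f 1 := by
    rw [hf']
    obtain ⟨i, hi⟩ : ∃ i, 0 < w i := by
      by_contra! h
      have : ∑ i, w i ≤ 0 := Finset.sum_nonpos fun i _ => h i
      linarith
    exact Finset.sum_pos' (fun i _ => mul_nonneg (pow_nonneg (hr0 i).le _) (hw0 i))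
      ⟨i, Finset.mem_univ _, mul_pos (pow_pos (hr0 i) _) hi⟩
  set J : Matrix (Fin (k + 1)) (Fin k) ℂ := Wᴴ.submatrix id Fin.castSucc with hJdef
  have hJJ : Jᴴ * J = 1 := by
    have : Jᴴ * J = (W * Wᴴ).submatrix Fin.castSucc Fin.castSucc := by
      ext i j; simp [J, Matrix.mul_apply, conjTranspose_apply]
    rw [this, hW']
    ext i j; simp [Matrix.one_apply]
  have hJv : J * Jᴴ + vecMulVec v (star v) = 1 := by
    rw [← hW]
    ext i j
    simp only [Matrix.add_apply, Matrix.mul_apply, vecMulVec_apply, Fin.sum_univ_castSucc, J]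
    rw [← hWv i, Pi.star_apply, ← hWv j]
    simp [conjTranspose_apply]
  have hcomp : ∀ Y, Jᴴ * Y * J = dropLast W Y := by
    intro Y
    ext i j
    simp [J, dropLast, Matrix.mul_apply, conjTranspose_apply]
  have hMJ : (z : ℂ) • (1 : Matrix (Fin k) (Fin k) ℂ) - dropLast W X = Jᴴ * M * J := by
    rw [hM, Matrix.mul_sub, Matrix.sub_mul, hcomp X, Matrix.mul_smul, Matrix.smul_mul,
      Matrix.mul_one, hJJ]
  have hMpd : M.PosDef := by rw [hMd]; exact conjDiag_posDef hV hV' hz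
  have hinj : Function.Injective J.mulVec := by
    intro a b hab
    have := congrArg (Jᴴ *ᵥ ·) hab
    simpa [Matrix.mulVec_mulVec, hJJ] using this
  have hpd : (Jᴴ * M * J).PosDef := hMpd.conjTranspose_mul_mul_same hinj
  set y : Fin (k + 1) → ℂ := ((√(f 1))⁻¹ : ℂ) • (R *ᵥ v) with hy
  obtain ⟨_, hS, htr⟩ := compression_inv hJJ hJv hv hMR hRh hf1
    (by simpa using hquad 1) hy
  set S := R - vecMulVec y (star y) with hSdef
  have hSpos : S.PosSemidef := by
    rw [hS]
    have := hpd.inv.posSemidef.mul_mul_conjTranspose_same J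
    exact this
  have hα : ∀ i, star y ⬝ᵥ (R ^ i *ᵥ y) = ((f (i + 2) / f 1 : ℝ) : ℂ) := by
    intro i
    have hsq : (√(f 1) : ℂ) * √(f 1) = f 1 := by exact_mod_cast Real.mul_self_sqrt hf1.le
    have h1 : star (R *ᵥ v) ⬝ᵥ (R ^ i *ᵥ (R *ᵥ v)) = (f (i + 2) : ℂ) := by
      rw [star_mulVec, hRh, ← dotProduct_mulVec, Matrix.mulVec_mulVec, Matrix.mulVec_mulVec,
        ← hquad]
      congr 2
      rw [← pow_succ', ← pow_succ]
    rw [hy, star_smul, mulVec_smul, dotProduct_smul, smul_dotProduct, h1]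
    simp only [star_inv₀, RCLike.star_def, Complex.conj_ofReal, smul_eq_mul]
    push_cast
    rw [← hsq]
    field_simp
  have hα0 : ∀ i, 0 ≤ f (i + 2) / f 1 := fun i => div_nonneg (hf0 _) (hf0 _)
  have hch : ∀ a b, f (a + 2) / f 1 * (f (b + 2) / f 1)
      ≤ f (0 + 2) / f 1 * (f (a + b + 2) / f 1) := by
    intro a b
    rw [div_mul_div_comm, div_mul_div_comm]
    have := weighted_power_sum_mul_le (w := fun i => r i ^ 2 * w i) (r := r)
      (fun i => mul_nonneg (sq_nonneg _) (hw0 i)) (fun i => (hr0 i).le) a b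
    simp only [← mul_assoc, ← pow_add] at this
    rw [← hf', ← hf', ← hf', ← hf'] at this
    gcongr
  refine ⟨hf1, hMJ ▸ hpd, ?_, ?_⟩
  · rw [resolventPow, hMJ, htr 1 one_pos, pow_one, hSdef, trace_sub, trace_vecMulVec,
      dotProduct_comm]
    have h0 := hα 0
    simp only [pow_zero, one_mulVec, zero_add] at h0
    rw [h0, hR, conjDiag_trace hV, ← Complex.ofReal_sub, Complex.ofReal_re]
  · intro p hp
    rw [resolventPow, hMJ, htr p (by omega)]
    have := rankOne_trace_pow_le hSdef hRh hSpos hα hα0 hch p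
    rw [hRpow, conjDiag_trace hV, Complex.ofReal_re] at this
    have e1 : p - 1 + 2 = p + 1 := by omega
    have e2 : p - 2 + 2 = p := by omega
    simpa only [e1, e2, zero_add] using this

lemma dropLast_posSemidef {k : ℕ} {X W : Matrix (Fin (k + 1)) (Fin (k + 1)) ℂ}
    (hX : X.PosSemidef) : (dropLast W X).PosSemidef :=
  (hX.mul_mul_conjTranspose_same W).submatrix _

/-! ### One step of the barrier argument -/

/-- The failure probability of the concentration events in one step. -/
def badProb (κ ρ ζ D : ℝ) : ℝ := 9 ^ 8 * 16 / κ ^ 8 * (ρ ^ 4 * ζ ^ 4 + ρ ^ 8 * ζ ^ 8) / D ^ 4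

/-- The additive loss in one step of the barrier argument. -/
def stepLoss (p : ℕ) (κ η ζ D θ : ℝ) : ℝ :=
  badProb κ (2 / η) ζ D * (1 + Real.exp θ * (p * ζ * 2 ^ (p + 1) / η))

lemma markov_pow_eight {x t : ℝ} (ht : 0 < t) (h : t < |x|) : 1 ≤ (t ^ 8)⁻¹ * x ^ 8 := by
  have h1 : t ^ 8 ≤ |x| ^ 8 := by gcongr
  have h2 : |x| ^ 8 = x ^ 8 := by rw [← abs_pow, abs_of_nonneg (by positivity)]
  rw [h2] at h1
  have h3 : 0 < t ^ 8 := by positivity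
  calc (1 : ℝ) = (t ^ 8)⁻¹ * t ^ 8 := (inv_mul_cancel₀ h3.ne').symm
    _ ≤ _ := by gcongr

/-- The concentration event for the first two power sums. -/
def StepGood {M : ℕ} (F : ℕ → (Fin M → Bool) → ℝ) (κ T₁ T₂ K : ℝ) (s : Fin M → Bool) : Prop :=
  |F 1 s - T₁ / K| ≤ κ * T₁ / K ∧ |F 2 s - T₂ / K| ≤ κ * T₂ / K

open Classical in
lemma cubeAvg_not_stepGood_le {M : ℕ} {F : ℕ → (Fin M → Bool) → ℝ} {κ ρ ζ D K T₁ T₂ T₄ : ℝ}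
    (hκ : 0 < κ) (hζ : 0 < ζ) (hρ : 0 < ρ) (hD : 0 < D) (hDK : D ≤ K)
    (hT₁ : K / ζ ≤ T₁) (hT₂ : K / ζ ^ 2 ≤ T₂) (hT₂ρ : T₂ ≤ ρ * T₁) (hT₄ρ : T₄ ≤ ρ ^ 2 * T₂)
    (hT₄ : 0 ≤ T₄)
    (hdev₁ : cubeAvg (fun s => (F 1 s - T₁ / K) ^ 8) ≤ 9 ^ 8 * (2 * T₂) ^ 4 / K ^ 8)
    (hdev₂ : cubeAvg (fun s => (F 2 s - T₂ / K) ^ 8) ≤ 9 ^ 8 * (2 * T₄) ^ 4 / K ^ 8) :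
    cubeAvg (fun s => if StepGood F κ T₁ T₂ K s then 0 else 1) ≤ badProb κ ρ ζ D := by
  have hK : 0 < K := hD.trans_le hDK
  have hT₁0 : 0 < T₁ := lt_of_lt_of_le (by positivity) hT₁
  have hT₂0 : 0 < T₂ := lt_of_lt_of_le (by positivity) hT₂
  have hpt : ∀ s, (if StepGood F κ T₁ T₂ K s then (0 : ℝ) else 1)
      ≤ ((κ * T₁ / K) ^ 8)⁻¹ * (F 1 s - T₁ / K) ^ 8
        + ((κ * T₂ / K) ^ 8)⁻¹ * (F 2 s - T₂ / K) ^ 8 := by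
    intro s
    have n1 : 0 ≤ ((κ * T₁ / K) ^ 8)⁻¹ * (F 1 s - T₁ / K) ^ 8 := by positivity
    have n2 : 0 ≤ ((κ * T₂ / K) ^ 8)⁻¹ * (F 2 s - T₂ / K) ^ 8 := by positivity
    split_ifs with h
    · positivity
    · rw [StepGood, not_and_or, not_le, not_le] at h
      rcases h with h | h
      · linarith [markov_pow_eight (by positivity) h]
      · linarith [markov_pow_eight (by positivity) h]
  refine (cubeAvg_mono hpt).trans ?_
  rw [cubeAvg_add, cubeAvg_const_mul, cubeAvg_const_mul]
  have b1 : ((κ * T₁ / K) ^ 8)⁻¹ * cubeAvg (fun s => (F 1 s - T₁ / K) ^ 8)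
      ≤ 9 ^ 8 * 16 / κ ^ 8 * (ρ ^ 4 * ζ ^ 4) / D ^ 4 := by
    have hx : T₂ ^ 4 / T₁ ^ 8 ≤ ρ ^ 4 * ζ ^ 4 / D ^ 4 := by
      have h1 : D ≤ T₁ * ζ := hDK.trans ((div_le_iff₀ hζ).mp hT₁)
      rw [div_le_div_iff₀ (by positivity) (by positivity)]
      calc T₂ ^ 4 * D ^ 4 ≤ (ρ * T₁) ^ 4 * (T₁ * ζ) ^ 4 := by gcongr
        _ = _ := by ring
    calc _ ≤ ((κ * T₁ / K) ^ 8)⁻¹ * (9 ^ 8 * (2 * T₂) ^ 4 / K ^ 8) := by gcongr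
      _ = 9 ^ 8 * 16 / κ ^ 8 * (T₂ ^ 4 / T₁ ^ 8) := by field_simp; ring
      _ ≤ 9 ^ 8 * 16 / κ ^ 8 * (ρ ^ 4 * ζ ^ 4 / D ^ 4) := by gcongr
      _ = _ := by ring
  have b2 : ((κ * T₂ / K) ^ 8)⁻¹ * cubeAvg (fun s => (F 2 s - T₂ / K) ^ 8)
      ≤ 9 ^ 8 * 16 / κ ^ 8 * (ρ ^ 8 * ζ ^ 8) / D ^ 4 := by
    have hx : T₄ ^ 4 / T₂ ^ 8 ≤ ρ ^ 8 * ζ ^ 8 / D ^ 4 := by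
      have h1 : D ≤ T₂ * ζ ^ 2 := hDK.trans ((div_le_iff₀ (by positivity)).mp hT₂)
      rw [div_le_div_iff₀ (by positivity) (by positivity)]
      calc T₄ ^ 4 * D ^ 4 ≤ (ρ ^ 2 * T₂) ^ 4 * (T₂ * ζ ^ 2) ^ 4 := by gcongr
        _ = _ := by ring
    calc _ ≤ ((κ * T₂ / K) ^ 8)⁻¹ * (9 ^ 8 * (2 * T₄) ^ 4 / K ^ 8) := by gcongr
      _ = 9 ^ 8 * 16 / κ ^ 8 * (T₄ ^ 4 / T₂ ^ 8) := by field_simp; ring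
      _ ≤ 9 ^ 8 * 16 / κ ^ 8 * (ρ ^ 8 * ζ ^ 8 / D ^ 4) := by gcongr
      _ = _ := by ring
  refine (add_le_add b1 b2).trans (le_of_eq ?_)
  rw [badProb]; ring

/-- The linearised upper bound for the higher power sum after one step. -/
def stepBound {M : ℕ} (F : ℕ → (Fin M → Bool) → ℝ) (p : ℕ) (κ δ K T₁ T₂ Tp1 Sp : ℝ)
    (s : Fin M → Bool) : ℝ :=
  Sp + p * δ * Tp1 - p * K / ((1 + κ) * T₁) * F (p + 1) s
    + p ^ 2 * (T₂ * K / T₁ ^ 2) * F p s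

lemma StepGood.first_le {M : ℕ} {F : ℕ → (Fin M → Bool) → ℝ} {κ K T₁ T₂ a δ S₁ : ℝ}
    {s : Fin M → Bool} (h : StepGood F (κ / 8) T₁ T₂ K s) (hκ : 0 < κ) (hκ1 : κ ≤ 1)
    (hK : 0 < K) (ha : 0 < a) (hT₂ : 0 < T₂) (hF1 : 0 < F 1 s)
    (hδ : δ = (1 - κ) / a) (hT₁S : T₁ ≤ S₁ + δ * T₂) (hT₁a : T₁ ≤ (1 + κ / 8) * a) :
    T₁ - F 2 s / F 1 s ≤ S₁ - κ / 2 * (T₂ / a) := by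
  obtain ⟨h1, h2⟩ := h
  have h1' : F 1 s ≤ (1 + κ / 8) * T₁ / K := by
    have := (abs_le.mp h1).2
    calc F 1 s ≤ T₁ / K + κ / 8 * T₁ / K := by linarith
      _ = _ := by ring
  have h2' : (1 - κ / 8) * T₂ / K ≤ F 2 s := by
    have := (abs_le.mp h2).1
    calc _ = T₂ / K - κ / 8 * T₂ / K := by ring
      _ ≤ _ := by linarith
  have h1'' : F 1 s ≤ (1 + κ / 8) ^ 2 * a / K := by
    calc F 1 s ≤ (1 + κ / 8) * T₁ / K := h1'
      _ ≤ (1 + κ / 8) * ((1 + κ / 8) * a) / K := by gcongr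
      _ = _ := by ring
  have h3 : (1 - 3 * κ / 8) * (T₂ / a) ≤ F 2 s / F 1 s := by
    rw [le_div_iff₀ hF1]
    by_cases hneg : (1 - 3 * κ / 8) ≤ 0
    · nlinarith
    push Not at hneg
    calc (1 - 3 * κ / 8) * (T₂ / a) * F 1 s
        ≤ (1 - 3 * κ / 8) * (T₂ / a) * ((1 + κ / 8) ^ 2 * a / K) := by gcongr
      _ = ((1 - 3 * κ / 8) * (1 + κ / 8) ^ 2) * T₂ / K := by field_simp
      _ ≤ (1 - κ / 8) * T₂ / K := by
        gcongr
        nlinarith [mul_pos hκ hκ, mul_pos (mul_pos hκ hκ) hκ]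
      _ ≤ _ := h2'
  have h4 : δ * T₂ = (1 - κ) * (T₂ / a) := by rw [hδ]; ring
  have h5 : 0 < T₂ / a := by positivity
  nlinarith

lemma StepGood.second_le {M : ℕ} {F : ℕ → (Fin M → Bool) → ℝ} {κ K T₁ T₂ Tp Tp1 Sp δ : ℝ} {p : ℕ}
    {s : Fin M → Bool} (h : StepGood F (κ / 8) T₁ T₂ K s) (hκ : 0 < κ) (hκ1 : κ ≤ 1)
    (hK : 0 < K) (hT₁ : 0 < T₁) (hT₂ : 0 < T₂) (hF1 : 0 < F 1 s) (hF0 : ∀ q, 0 ≤ F q s)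
    (hTp : Tp ≤ Sp + p * δ * Tp1) :
    Tp - p * (F (p + 1) s / F 1 s) + (p * (p - 1) / 2 : ℝ) * (F 2 s / F 1 s * (F p s / F 1 s))
      ≤ stepBound F p (κ / 8) δ K T₁ T₂ Tp1 Sp s := by
  obtain ⟨h1, h2⟩ := h
  have h1u : F 1 s ≤ (1 + κ / 8) * T₁ / K := by
    have := (abs_le.mp h1).2
    calc F 1 s ≤ T₁ / K + κ / 8 * T₁ / K := by linarith
      _ = _ := by ring
  have h1l : (7 / 8) * T₁ / K ≤ F 1 s := by
    have := (abs_le.mp h1).1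
    have h0 : 0 < T₁ / K := by positivity
    calc _ = 7 / 8 * (T₁ / K) := by ring
      _ ≤ T₁ / K - κ / 8 * (T₁ / K) := by nlinarith
      _ = T₁ / K - κ / 8 * T₁ / K := by ring
      _ ≤ _ := by linarith
  have h2u : F 2 s ≤ 9 / 8 * T₂ / K := by
    have := (abs_le.mp h2).2
    have h0 : 0 < T₂ / K := by positivity
    calc F 2 s ≤ T₂ / K + κ / 8 * T₂ / K := by linarith
      _ = T₂ / K + κ / 8 * (T₂ / K) := by ring
      _ ≤ 9 / 8 * (T₂ / K) := by nlinarith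
      _ = _ := by ring
  have hA : p * K / ((1 + κ / 8) * T₁) * F (p + 1) s ≤ p * (F (p + 1) s / F 1 s) := by
    have : K / ((1 + κ / 8) * T₁) ≤ 1 / F 1 s := by
      rw [div_le_div_iff₀ (by positivity) hF1]
      calc K * F 1 s ≤ K * ((1 + κ / 8) * T₁ / K) := by gcongr
        _ = _ := by field_simp
    calc p * K / ((1 + κ / 8) * T₁) * F (p + 1) s
        = p * F (p + 1) s * (K / ((1 + κ / 8) * T₁)) := by ring
      _ ≤ p * F (p + 1) s * (1 / F 1 s) :=
        mul_le_mul_of_nonneg_left this (mul_nonneg (Nat.cast_nonneg _) (hF0 _))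
      _ = _ := by ring
  have hB : (p * (p - 1) / 2 : ℝ) * (F 2 s / F 1 s * (F p s / F 1 s))
      ≤ p ^ 2 * (T₂ * K / T₁ ^ 2) * F p s := by
    have e1 : F 2 s / F 1 s ^ 2 ≤ 2 * (T₂ * K / T₁ ^ 2) := by
      calc F 2 s / F 1 s ^ 2 ≤ (9 / 8 * T₂ / K) / ((7 / 8) * T₁ / K) ^ 2 := by gcongr
        _ = (72 / 49) * (T₂ * K / T₁ ^ 2) := by field_simp; norm_num
        _ ≤ _ := by gcongr; norm_num
    have e2 : (p * (p - 1) / 2 : ℝ) ≤ p ^ 2 / 2 := by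
      have : (0 : ℝ) ≤ p := Nat.cast_nonneg _
      nlinarith
    have hF2 := hF0 2
    have hFp := hF0 p
    calc _ ≤ (p ^ 2 / 2 : ℝ) * (F 2 s / F 1 s * (F p s / F 1 s)) := by gcongr
      _ = (p ^ 2 / 2 : ℝ) * (F 2 s / F 1 s ^ 2) * F p s := by field_simp
      _ ≤ (p ^ 2 / 2 : ℝ) * (2 * (T₂ * K / T₁ ^ 2)) * F p s := by gcongr
      _ = _ := by ring
  unfold stepBound
  linarith

lemma cubeAvg_stepBound_le {M : ℕ} {F : ℕ → (Fin M → Bool) → ℝ}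
    {κ K T₁ T₂ Tp Tp1 Sp a δ ζ : ℝ} {p : ℕ} (hκ : 0 < κ) (hκ1 : κ ≤ 1)
    (hK : 0 < K) (ha : 0 < a) (hζ : 0 < ζ) (hT₁ : K / ζ ≤ T₁) (hT₂ : 0 < T₂)
    (hTp : 0 ≤ Tp) (hTp1 : 0 ≤ Tp1) (hSp : 0 ≤ Sp)
    (havgp : cubeAvg (F p) = Tp / K) (havgp1 : cubeAvg (F (p + 1)) = Tp1 / K)
    (hδ : δ = (1 - κ) / a) (hTp2 : Tp ≤ 2 * Sp) (hT₁a : T₁ ≤ (1 + κ / 8) * a) :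
    cubeAvg (stepBound F p (κ / 8) δ K T₁ T₂ Tp1 Sp)
      ≤ Sp * Real.exp (2 * p ^ 2 * ζ ^ 2 / K ^ 2 * T₂) := by
  have hT₁0 : 0 < T₁ := lt_of_lt_of_le (by positivity) hT₁
  have e : cubeAvg (stepBound F p (κ / 8) δ K T₁ T₂ Tp1 Sp)
      = Sp + p * δ * Tp1 - p * K / ((1 + κ / 8) * T₁) * (Tp1 / K)
        + p ^ 2 * (T₂ * K / T₁ ^ 2) * (Tp / K) := by
    have : stepBound F p (κ / 8) δ K T₁ T₂ Tp1 Sp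
        = fun s => ((Sp + p * δ * Tp1) + (-(p * K / ((1 + κ / 8) * T₁))) * F (p + 1) s)
          + p ^ 2 * (T₂ * K / T₁ ^ 2) * F p s := by
      ext s; unfold stepBound; ring
    rw [this, cubeAvg_add, cubeAvg_add, cubeAvg_const, cubeAvg_const_mul, cubeAvg_const_mul,
      ← havgp, ← havgp1]
    simp only [sub_eq_add_neg, neg_mul]
  have h1 : p * δ * Tp1 ≤ p * K / ((1 + κ / 8) * T₁) * (Tp1 / K) := by
    have hd : δ ≤ 1 / ((1 + κ / 8) * T₁) := by
      rw [hδ, div_le_div_iff₀ ha (by positivity)]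
      have h0 : (1 - κ) * (1 + κ / 8) ^ 2 ≤ 1 := by
        nlinarith [mul_pos hκ hκ, mul_pos (mul_pos hκ hκ) hκ]
      have hk1 : 0 ≤ 1 - κ := by linarith
      calc (1 - κ) * ((1 + κ / 8) * T₁) ≤ (1 - κ) * ((1 + κ / 8) * ((1 + κ / 8) * a)) := by gcongr
        _ = ((1 - κ) * (1 + κ / 8) ^ 2) * a := by ring
        _ ≤ 1 * a := by gcongr
    calc p * δ * Tp1 ≤ p * (1 / ((1 + κ / 8) * T₁)) * Tp1 := by gcongr
      _ = _ := by field_simp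
  have h2 : p ^ 2 * (T₂ * K / T₁ ^ 2) * (Tp / K) ≤ Sp * (2 * p ^ 2 * ζ ^ 2 / K ^ 2 * T₂) := by
    have hx : (1 : ℝ) / T₁ ^ 2 ≤ ζ ^ 2 / K ^ 2 := by
      rw [← div_pow, ← _root_.one_div_pow]
      have : 1 / T₁ ≤ ζ / K := by
        rw [div_le_div_iff₀ hT₁0 hK, one_mul, mul_comm]
        exact (div_le_iff₀ hζ).mp hT₁
      gcongr
    calc _ = p ^ 2 * T₂ * (1 / T₁ ^ 2) * Tp := by field_simp
      _ ≤ p ^ 2 * T₂ * (ζ ^ 2 / K ^ 2) * (2 * Sp) := by gcongr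
      _ = _ := by ring
  have h3 := Real.add_one_le_exp (2 * p ^ 2 * ζ ^ 2 / K ^ 2 * T₂)
  rw [e]
  nlinarith

/-- One step of the barrier argument, in terms of power sums only. -/
lemma barrier_step {M : ℕ} {F : ℕ → (Fin M → Bool) → ℝ} {Φ Ψ frac : (Fin M → Bool) → ℝ}
    {κ K D T₁ T₂ T₄ Tp Tp1 S₁ Sp a δ ζ η θ c₀ : ℝ} {p : ℕ} (hκ : 0 < κ) (hκ1 : κ ≤ 1)
    (hD : 0 < D) (hDK : D ≤ K) (ha : 0 < a) (hζ : 0 < ζ) (hη : 0 < η) (hc₀ : 0 ≤ c₀)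
    (hδ : δ = (1 - κ) / a) (hθ : θ = 4 * p ^ 2 * a ^ 2 * ζ ^ 2 / (κ * D ^ 2))
    (hT₁ : K / ζ ≤ T₁) (hT₂ : K / ζ ^ 2 ≤ T₂) (hT₄ : 0 ≤ T₄) (hTp : 0 ≤ Tp)
    (hTp1 : 0 ≤ Tp1) (hSp : 0 ≤ Sp) (hT₂ρ : T₂ ≤ 2 / η * T₁) (hT₄ρ : T₄ ≤ (2 / η) ^ 2 * T₂)
    (hT₁S : T₁ ≤ S₁ + δ * T₂) (hT₁a : T₁ ≤ (1 + κ / 8) * a) (hS₁a : S₁ ≤ a)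
    (hTpS : Tp ≤ Sp + p * δ * Tp1) (hTp2 : Tp ≤ 2 * Sp)
    (hF1 : ∀ s, 0 < F 1 s) (hF0 : ∀ q s, 0 ≤ F q s) (hFρ : ∀ s, F (p + 1) s ≤ (2 / η) ^ (p + 1))
    (havgp : cubeAvg (F p) = Tp / K) (havgp1 : cubeAvg (F (p + 1)) = Tp1 / K)
    (hdev₁ : cubeAvg (fun s => (F 1 s - T₁ / K) ^ 8) ≤ 9 ^ 8 * (2 * T₂) ^ 4 / K ^ 8)
    (hdev₂ : cubeAvg (fun s => (F 2 s - T₂ / K) ^ 8) ≤ 9 ^ 8 * (2 * T₄) ^ 4 / K ^ 8)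
    (hΦ : ∀ s, Φ s = T₁ - F 2 s / F 1 s) (hΨ0 : ∀ s, 0 ≤ Ψ s)
    (hΨ : ∀ s, Ψ s ≤ Tp - p * (F (p + 1) s / F 1 s)
      + (p * (p - 1) / 2 : ℝ) * (F 2 s / F 1 s * (F p s / F 1 s)))
    (hfrac1 : ∀ s, frac s ≤ 1)
    (hfrac : ∀ s, Φ s ≤ a → frac s ≤ η ^ p * Ψ s * Real.exp (θ * Φ s / a) + c₀) :
    cubeAvg frac ≤ η ^ p * Sp * Real.exp (θ * S₁ / a) + (c₀ + stepLoss p (κ / 8) η ζ D θ) := by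
  classical
  have hK : 0 < K := hD.trans_le hDK
  have hT₁0 : 0 < T₁ := lt_of_lt_of_le (by positivity) hT₁
  have hT₂0 : 0 < T₂ := lt_of_lt_of_le (by positivity) hT₂
  have hθ0 : 0 ≤ θ := by rw [hθ]; positivity
  have hδ0 : 0 ≤ δ := by rw [hδ]; exact div_nonneg (by linarith) ha.le
  set w := η ^ p * Real.exp (θ * (S₁ - κ / 2 * (T₂ / a)) / a) with hw
  have hw0 : 0 < w := by positivity
  set T := stepBound F p (κ / 8) δ K T₁ T₂ Tp1 Sp with hT
  set L := Real.exp θ * (p * ζ * 2 ^ (p + 1) / η) with hL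
  have hL0 : 0 ≤ L := by positivity
  set bad : (Fin M → Bool) → ℝ := fun s => if StepGood F (κ / 8) T₁ T₂ K s then 0 else 1 with hbad
  have hwT : ∀ s, -L ≤ w * T s := by
    intro s
    have h1 : -(p * ζ * (2 / η) ^ (p + 1)) ≤ T s := by
      have h2 : p * K / ((1 + κ / 8) * T₁) * F (p + 1) s ≤ p * ζ * (2 / η) ^ (p + 1) := by
        have h3 : p * K / ((1 + κ / 8) * T₁) ≤ p * ζ := by
          rw [div_le_iff₀ (by positivity)]
          have h4 : K ≤ T₁ * ζ := (div_le_iff₀ hζ).mp hT₁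
          calc p * K ≤ p * (T₁ * ζ) := by gcongr
            _ ≤ (1 + κ / 8) * (p * (T₁ * ζ)) := le_mul_of_one_le_left (by positivity) (by linarith)
            _ = _ := by ring
        have := hF0 (p + 1) s
        have := hFρ s
        gcongr
      have h5 : 0 ≤ p * δ * Tp1 := by positivity
      have h6 : 0 ≤ p ^ 2 * (T₂ * K / T₁ ^ 2) * F p s := mul_nonneg (by positivity) (hF0 p s)
      rw [hT]; unfold stepBound
      linarith
    have h2 : w * (p * ζ * (2 / η) ^ (p + 1)) ≤ L := by
      have h3 : θ * (S₁ - κ / 2 * (T₂ / a)) / a ≤ θ := by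
        rw [div_le_iff₀ ha]
        have : 0 ≤ κ / 2 * (T₂ / a) := by positivity
        gcongr
        linarith
      calc w * (p * ζ * (2 / η) ^ (p + 1))
          ≤ η ^ p * Real.exp θ * (p * ζ * (2 / η) ^ (p + 1)) := by rw [hw]; gcongr
        _ = L := by rw [hL, div_pow]; field_simp; ring
    nlinarith
  have hpt : ∀ s, frac s ≤ (w * T s + c₀) + (1 + L) * bad s := by
    intro s
    by_cases hs : StepGood F (κ / 8) T₁ T₂ K s
    · have hb : bad s = 0 := by simp [hbad, hs]
      have h1 := hs.first_le hκ hκ1 hK ha hT₂0 (hF1 s) hδ hT₁S hT₁a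
      rw [← hΦ] at h1
      have h2 := (hΨ s).trans (hs.second_le hκ hκ1 hK hT₁0 hT₂0 (hF1 s) (fun q => hF0 q s) hTpS)
      have h0 : 0 ≤ κ / 2 * (T₂ / a) := by positivity
      have h3 := hfrac s (by linarith)
      rw [hb, mul_zero, add_zero]
      refine h3.trans ?_
      have := hΨ0 s
      refine add_le_add_left ?_ _
      calc η ^ p * Ψ s * Real.exp (θ * Φ s / a) = (η ^ p * Real.exp (θ * Φ s / a)) * Ψ s := by ring
        _ ≤ w * T s := by
          rw [hw]
          gcongr
    · have hb : bad s = 1 := by simp [hbad, hs]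
      rw [hb]
      linarith [hfrac1 s, hwT s]
  have hbadle : cubeAvg bad ≤ badProb (κ / 8) (2 / η) ζ D :=
    cubeAvg_not_stepGood_le (by positivity) hζ (by positivity) hD hDK hT₁ hT₂ hT₂ρ hT₄ρ hT₄
      hdev₁ hdev₂
  have hTavg : cubeAvg T ≤ Sp * Real.exp (2 * p ^ 2 * ζ ^ 2 / K ^ 2 * T₂) :=
    cubeAvg_stepBound_le hκ hκ1 hK ha hζ hT₁ hT₂0 hTp hTp1 hSp havgp havgp1 hδ hTp2 hT₁a
  have hmain : w * cubeAvg T ≤ η ^ p * Sp * Real.exp (θ * S₁ / a) := by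
    calc w * cubeAvg T ≤ w * (Sp * Real.exp (2 * p ^ 2 * ζ ^ 2 / K ^ 2 * T₂)) := by gcongr
      _ = η ^ p * Sp * Real.exp (θ * (S₁ - κ / 2 * (T₂ / a)) / a
          + 2 * p ^ 2 * ζ ^ 2 / K ^ 2 * T₂) := by rw [hw, Real.exp_add]; ring
      _ ≤ _ := by
        gcongr
        have : 2 * p ^ 2 * ζ ^ 2 / K ^ 2 * T₂ ≤ θ * (κ / 2 * (T₂ / a)) / a := by
          calc 2 * p ^ 2 * ζ ^ 2 / K ^ 2 * T₂ ≤ 2 * p ^ 2 * ζ ^ 2 / D ^ 2 * T₂ := by gcongr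
            _ = θ * (κ / 2 * (T₂ / a)) / a := by rw [hθ]; field_simp; ring
        rw [mul_sub, sub_div]
        linarith
  calc cubeAvg frac ≤ cubeAvg (fun s => (w * T s + c₀) + (1 + L) * bad s) := cubeAvg_mono hpt
    _ = (w * cubeAvg T + c₀) + (1 + L) * cubeAvg bad := by
      rw [cubeAvg_add, cubeAvg_const_mul, cubeAvg_add, cubeAvg_const_mul, cubeAvg_const]
    _ ≤ (η ^ p * Sp * Real.exp (θ * S₁ / a) + c₀) + (1 + L) * badProb (κ / 8) (2 / η) ζ D := by
      gcongr
    _ = _ := by rw [stepLoss, hL]; ring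

/-! ### Iterating the barrier argument -/

lemma inv_sub_pow_le {u δ : ℝ} (hδ : 0 ≤ δ) (hu : 2 * δ ≤ u) (hu0 : 0 < u) (q : ℕ) :
    ((u - δ)⁻¹) ^ q ≤ (u⁻¹) ^ q + q * δ * ((u - δ)⁻¹) ^ (q + 1) := by
  have hud : 0 < u - δ := by linarith
  set r := (u - δ)⁻¹ with hr
  have hr0 : 0 < r := inv_pos.mpr hud
  have hx : δ * r ≤ 1 := by
    rw [hr, ← div_eq_mul_inv, div_le_one hud]; linarith
  have hx0 : 0 ≤ δ * r := by positivity
  have h1 : r * (1 + -(δ * r)) ≤ u⁻¹ := by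
    have h3 : (u - δ) * r = 1 := mul_inv_cancel₀ hud.ne'
    rw [← one_div, le_div_iff₀ hu0]
    nlinarith
  have h2 := one_add_mul_le_pow (a := -(δ * r)) (by linarith) q
  have h3 : r ^ q * (1 + -(δ * r)) ^ q ≤ (u⁻¹) ^ q := by
    rw [← mul_pow]
    exact pow_le_pow_left₀ (mul_nonneg hr0.le (by linarith)) h1 q
  have h4 : r ^ q * (1 + q * -(δ * r)) ≤ r ^ q * (1 + -(δ * r)) ^ q := by gcongr
  rw [pow_succ]
  nlinarith

lemma inv_sub_pow_le_two {u δ : ℝ} {p : ℕ} (hδ : 0 ≤ δ) (hp : 1 ≤ p) (hu : 2 * p * δ ≤ u)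
    (hu0 : 0 < u) : ((u - δ)⁻¹) ^ p ≤ 2 * (u⁻¹) ^ p := by
  have hp' : (1 : ℝ) ≤ p := by exact_mod_cast hp
  have hud : 0 < u - δ := by nlinarith
  have h1 := one_add_mul_le_pow (a := -(δ / u)) (by
    have : δ / u ≤ 1 := by rw [div_le_one hu0]; nlinarith
    linarith) p
  have h2 : p * (δ / u) ≤ 1 / 2 := by
    rw [← mul_div_assoc, div_le_iff₀ hu0]; linarith
  have h3 : (1 : ℝ) / 2 ≤ (1 + -(δ / u)) ^ p := by linarith
  have h4 : u - δ = u * (1 + -(δ / u)) := by field_simp; ring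
  have h5 : 0 < 1 + -(δ / u) := by
    by_contra hneg
    have : u * (1 + -(δ / u)) ≤ 0 := mul_nonpos_of_nonneg_of_nonpos hu0.le (not_lt.mp hneg)
    linarith
  rw [h4, mul_inv, mul_pow, mul_comm]
  have h6 : ((1 + -(δ / u))⁻¹) ^ p ≤ 2 := by
    rw [inv_pow]
    exact inv_le_of_inv_le₀ (by norm_num) (by linarith)
  gcongr

lemma inv_sub_le {u δ κ η : ℝ} (hκ : 0 < κ) (hκ1 : κ ≤ 1) (hη : 0 < η) (hu : η ≤ u)
    (hδη : 16 * δ ≤ κ * η) :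
    0 < u - δ ∧ (u - δ)⁻¹ ≤ 2 / η ∧ (u - δ)⁻¹ ≤ (1 + κ / 8) * u⁻¹ := by
  have h1 : κ * η ≤ κ * u := by gcongr
  have h2 : κ * u ≤ u := by nlinarith
  have hud : 0 < u - δ := by nlinarith
  refine ⟨hud, ?_, ?_⟩
  · rw [← one_div, div_le_div_iff₀ hud hη]; nlinarith
  · rw [← div_eq_mul_inv, ← one_div, div_le_div_iff₀ hud (by linarith)]
    nlinarith

/-- The block sum of a matrix with a `1 × 1` identity block. -/
def extendOne {k : ℕ} (U : Matrix (Fin k) (Fin k) ℂ) : Matrix (Fin (k + 1)) (Fin (k + 1)) ℂ :=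
  fun i j => Fin.lastCases (Fin.lastCases 1 (fun _ => 0) j)
    (fun i' => Fin.lastCases 0 (fun j' => U i' j') j) i

section extendOne
variable {k : ℕ} (U : Matrix (Fin k) (Fin k) ℂ)

@[simp] lemma extendOne_castSucc_castSucc (i j : Fin k) :
    extendOne U i.castSucc j.castSucc = U i j := by simp [extendOne]

@[simp] lemma extendOne_castSucc_last (i : Fin k) :
    extendOne U i.castSucc (Fin.last k) = 0 := by simp [extendOne]

@[simp] lemma extendOne_last_castSucc (j : Fin k) :
    extendOne U (Fin.last k) j.castSucc = 0 := by simp [extendOne]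

@[simp] lemma extendOne_last_last : extendOne U (Fin.last k) (Fin.last k) = 1 := by
  simp [extendOne]

lemma extendOne_unitary {U : Matrix (Fin k) (Fin k) ℂ} (hU : Uᴴ * U = 1) :
    (extendOne U)ᴴ * extendOne U = 1 := by
  have h := fun i j => congrFun (congrFun hU i) j
  simp only [Matrix.mul_apply, conjTranspose_apply] at h
  ext i j
  rw [Matrix.mul_apply, Fin.sum_univ_castSucc]
  induction i using Fin.lastCases with
  | last =>
    induction j using Fin.lastCases with
    | last => simp [conjTranspose_apply]
    | cast j => simp [conjTranspose_apply, (Fin.castSucc_ne_last j).symm]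
  | cast i =>
    induction j using Fin.lastCases with
    | last => simp [conjTranspose_apply, Fin.castSucc_ne_last i]
    | cast j => simpa [conjTranspose_apply, Matrix.one_apply] using h i j

lemma extendOne_submatrix (Y : Matrix (Fin (k + 1)) (Fin (k + 1)) ℂ) :
    (extendOne U * Y * (extendOne U)ᴴ).submatrix Fin.castSucc Fin.castSucc
      = U * Y.submatrix Fin.castSucc Fin.castSucc * Uᴴ := by
  ext i j
  simp [Matrix.mul_apply, Fin.sum_univ_castSucc, conjTranspose_apply]

end extendOne

/-- The leading `d × d` corner. -/
def corner {d : ℕ} (j : ℕ) (Y : Matrix (Fin (d + j)) (Fin (d + j)) ℂ) : Matrix (Fin d) (Fin d) ℂ :=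
  Y.submatrix (Fin.castAdd j) (Fin.castAdd j)

open Classical in
/-- The proportion of members of a family of rotations for which the rotated corner is not
below `c`. -/
def badFrac {I : Type} [Fintype I] {d j : ℕ} (c : ℝ)
    (U : I → Matrix (Fin (d + j)) (Fin (d + j)) ℂ) (X : Matrix (Fin (d + j)) (Fin (d + j)) ℂ) : ℝ :=
  (∑ i, if ((c : ℂ) • (1 : Matrix (Fin d) (Fin d) ℂ) - corner j (U i * X * (U i)ᴴ)).PosDef
    then 0 else 1) / Fintype.card I

lemma badFrac_le_one {I : Type} [Fintype I] {d j : ℕ} (c : ℝ)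
    (U : I → Matrix (Fin (d + j)) (Fin (d + j)) ℂ) (X : Matrix (Fin (d + j)) (Fin (d + j)) ℂ) :
    badFrac c U X ≤ 1 := by
  classical
  refine div_le_one_of_le₀ ?_ (by positivity)
  calc _ ≤ ∑ _i : I, (1 : ℝ) := Finset.sum_le_sum fun i _ => by split_ifs <;> norm_num
    _ = _ := by simp

lemma badFrac_extend {I : Type} [Fintype I] {d j : ℕ} (c : ℝ)
    (U : I → Matrix (Fin (d + j)) (Fin (d + j)) ℂ)
    (W : (Fin (d + j + 1) → Bool) → Matrix (Fin (d + j + 1)) (Fin (d + j + 1)) ℂ)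
    (X : Matrix (Fin (d + j + 1)) (Fin (d + j + 1)) ℂ) :
    badFrac (j := j + 1) c (fun q : I × (Fin (d + j + 1) → Bool) => extendOne (U q.1) * W q.2) X
      = cubeAvg (fun s => badFrac c U (dropLast (W s) X)) := by
  classical
  have h : ∀ i s, corner (j + 1) (extendOne (U i) * W s * X * (extendOne (U i) * W s)ᴴ)
      = corner j (U i * dropLast (W s) X * (U i)ᴴ) := by
    intro i s
    rw [dropLast, ← extendOne_submatrix, conjTranspose_mul]
    simp only [Matrix.mul_assoc]
    rfl
  unfold badFrac cubeAvg
  rw [Fintype.sum_prod_type_right, ← Finset.sum_div, div_div]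
  congr 1
  · refine Finset.sum_congr rfl fun s _ => Finset.sum_congr rfl fun i _ => ?_
    have := h i s
    simp only [this]
  · simp

lemma cubeAvg_le_one {M : ℕ} {f : (Fin M → Bool) → ℝ} (h : ∀ s, f s ≤ 1) : cubeAvg f ≤ 1 :=
  (cubeAvg_mono h).trans (cubeAvg_const 1).le

lemma resolventPow_nonneg {ι : Type*} [Fintype ι] [DecidableEq ι] {z : ℝ} {X : Matrix ι ι ℂ}
    (h : ((z : ℂ) • (1 : Matrix ι ι ℂ) - X).PosDef) (q : ℕ) : 0 ≤ resolventPow z X q :=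
  (Complex.nonneg_iff.mp ((h.inv.posSemidef.pow q).trace_nonneg)).1

/-- One compression step: averaging over random directions propagates a bound on `frac`. -/
lemma rotation_step {k p : ℕ} (hp : 2 ≤ p) {κ a ζ η δ θ z D c₀ : ℝ}
    (hκ : 0 < κ) (hκ1 : κ ≤ 1) (ha : 0 < a) (hζ : 0 < ζ) (hη : 0 < η) (hD : 0 < D)
    (hDk : D ≤ ((k + 1 : ℕ) : ℝ)) (hc₀ : 0 ≤ c₀)
    (hδ : δ = (1 - κ) / a) (hδη : 16 * δ ≤ κ * η) (hpδ : 2 * p * δ ≤ η)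
    (hθ : θ = 4 * p ^ 2 * a ^ 2 * ζ ^ 2 / (κ * D ^ 2)) (hj : z ≤ ζ)
    {W : (Fin (k + 1) → Bool) → Matrix (Fin (k + 1)) (Fin (k + 1)) ℂ}
    (hW : ∀ s, (W s)ᴴ * W s = 1) (hW' : ∀ s, W s * (W s)ᴴ = 1)
    (hWv : ∀ s i, (W s)ᴴ i (Fin.last k) = signVec s i)
    {X : Matrix (Fin (k + 1)) (Fin (k + 1)) ℂ} (hX : X.PosSemidef)
    (hzX : ((z : ℂ) • (1 : Matrix (Fin (k + 1)) (Fin (k + 1)) ℂ) - X).PosDef)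
    (hSa : resolventPow z X 1 ≤ a) {frac : (Fin (k + 1) → Bool) → ℝ} (hfrac1 : ∀ s, frac s ≤ 1)
    (hfrac : ∀ s, (((z - δ : ℝ) : ℂ) • (1 : Matrix (Fin k) (Fin k) ℂ) - dropLast (W s) X).PosDef →
      resolventPow (z - δ) (dropLast (W s) X) 1 ≤ a →
      frac s ≤ η ^ p * resolventPow (z - δ) (dropLast (W s) X) p
        * Real.exp (θ * resolventPow (z - δ) (dropLast (W s) X) 1 / a) + c₀) :
    cubeAvg frac ≤ η ^ p * resolventPow z X p * Real.exp (θ * resolventPow z X 1 / a)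
      + (c₀ + stepLoss p (κ / 8) η ζ D θ) := by
  have hδ0 : 0 ≤ δ := by rw [hδ]; exact div_nonneg (by linarith) ha.le
  have hθ0 : 0 ≤ θ := by rw [hθ]; positivity
  have hloss0 : 0 ≤ stepLoss p (κ / 8) η ζ D θ := by unfold stepLoss badProb; positivity
  have hk : 0 < k + 1 := by omega
  obtain ⟨V, lam, hV, hV', hXV⟩ := exists_eq_conjDiag hX.1
  have hlam0 : ∀ i, 0 ≤ lam i := by
    rw [hXV] at hX
    exact nonneg_of_conjDiag_posSemidef hV hX
  have hu0 : ∀ i, 0 < z - lam i := by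
    rw [hXV, conjDiag_sub hV'] at hzX
    exact pos_of_conjDiag_posDef hV hzX
  have hSq : ∀ q, resolventPow z X q = ∑ i, ((z - lam i)⁻¹) ^ q := fun q => by
    rw [hXV]; exact resolventPow_conjDiag hV hV' hu0 q
  by_cases hsmall : ∃ i, z - lam i < η
  · obtain ⟨i, hi⟩ := hsmall
    refine (cubeAvg_le_one hfrac1).trans ?_
    have h1 : 1 ≤ η ^ p * resolventPow z X p := by
      rw [hSq]
      have h2 : ((z - lam i)⁻¹) ^ p ≤ ∑ i, ((z - lam i)⁻¹) ^ p :=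
        Finset.single_le_sum (f := fun i => ((z - lam i)⁻¹) ^ p)
          (fun i _ => pow_nonneg (inv_nonneg.mpr (hu0 i).le) p) (Finset.mem_univ i)
      have h3 : (η⁻¹) ^ p ≤ ((z - lam i)⁻¹) ^ p := by
        have := hu0 i
        gcongr
      calc (1 : ℝ) = η ^ p * (η⁻¹) ^ p := by
            rw [← mul_pow, mul_inv_cancel₀ hη.ne', one_pow]
        _ ≤ _ := by gcongr; exact h3.trans h2
    have h2 : 1 ≤ Real.exp (θ * resolventPow z X 1 / a) := by
      apply Real.one_le_exp
      have := resolventPow_nonneg hzX 1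
      positivity
    nlinarith
  push Not at hsmall
  have hb := fun i => inv_sub_le hκ hκ1 hη (hsmall i) hδη
  have hr : ∀ i, z - δ - lam i = z - lam i - δ := fun i => by ring
  set r : Fin (k + 1) → ℝ := fun i => (z - lam i - δ)⁻¹ with hrdef
  have hr0 : ∀ i, 0 < r i := fun i => inv_pos.mpr (hb i).1
  have hrρ : ∀ i, r i ≤ 2 / η := fun i => (hb i).2.1
  have hrζ : ∀ i, 1 / ζ ≤ r i := by
    intro i
    change 1 / ζ ≤ (z - lam i - δ)⁻¹
    rw [← one_div (z - lam i - δ)]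
    exact one_div_le_one_div_of_le (hb i).1 (by linarith [hlam0 i])
  set f : ℕ → (Fin (k + 1) → Bool) → ℝ := fun q s =>
    ∑ i, r i ^ q * Complex.normSq ((Vᴴ *ᵥ signVec s) i) with hf
  have hest := fun s => dropLast_estimates (z := z - δ) (f := fun q => f q s) hV hV' hXV
    (fun i => by rw [hr]; exact (hb i).1) (hW s) (hW' s) (hWv s) (signVec_norm hk s)
    (fun q => by simp only [hf, hr, hrdef])
  simp only [hr] at hest
  have hfq : ∀ q s, f q s = quadRe (conjDiag V (fun i => r i ^ q)) (signVec s) := by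
    intro q s; rw [quadRe_conjDiag]
  have htr : ∀ q, (conjDiag V (fun i => r i ^ q)).trace.re = ∑ i, r i ^ q := by
    intro q; rw [conjDiag_trace hV, Complex.ofReal_re]
  have hK : ((k + 1 : ℕ) : ℝ) = ∑ _i : Fin (k + 1), (1 : ℝ) := by simp
  have havg : ∀ q, cubeAvg (f q) = (∑ i, r i ^ q) / ((k + 1 : ℕ) : ℝ) := by
    intro q
    rw [← htr, ← cubeAvg_quadRe_signVec]
    congr 1; ext s; exact hfq q s
  have hdev : ∀ q, cubeAvg (fun s => (f q s - (∑ i, r i ^ q) / ((k + 1 : ℕ) : ℝ)) ^ 8)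
      ≤ 9 ^ 8 * (2 * ∑ i, r i ^ (2 * q)) ^ 4 / ((k + 1 : ℕ) : ℝ) ^ 8 := by
    intro q
    have := cubeAvg_quadRe_deviation (conjDiag_conjTranspose V (fun i => r i ^ q))
    rw [conjDiag_mul hV] at this
    simp only [← pow_add, ← two_mul, ← hfq, htr] at this
    exact this
  have hwsum : ∀ s, ∑ i, Complex.normSq ((Vᴴ *ᵥ signVec s) i) = 1 := by
    intro s
    have := sum_normSq_conjTranspose_mulVec hV' (signVec s)
    rw [signVec_norm hk] at this
    exact_mod_cast this
  have hdev1 : cubeAvg (fun s => (f 1 s - (∑ i, r i ^ 1) / ((k + 1 : ℕ) : ℝ)) ^ 8)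
      ≤ 9 ^ 8 * (2 * ∑ i, r i ^ 2) ^ 4 / ((k + 1 : ℕ) : ℝ) ^ 8 := hdev 1
  have hΦ : ∀ s, resolventPow (z - δ) (dropLast (W s) X) 1 = ∑ i, r i ^ 1 - f 2 s / f 1 s := by
    intro s
    simp only [pow_one]
    exact (hest s).2.2.1
  have hΨ : ∀ s, resolventPow (z - δ) (dropLast (W s) X) p ≤ ∑ i, r i ^ p
      - p * (f (p + 1) s / f 1 s) + (p * (p - 1) / 2 : ℝ) * (f 2 s / f 1 s * (f p s / f 1 s)) :=
    fun s => (hest s).2.2.2 p hp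
  refine barrier_step (p := p) (F := f)
    (Φ := fun s => resolventPow (z - δ) (dropLast (W s) X) 1)
    (Ψ := fun s => resolventPow (z - δ) (dropLast (W s) X) p)
    (frac := frac)
    (K := ((k + 1 : ℕ) : ℝ)) (D := D) (T₁ := ∑ i, r i ^ 1) (T₂ := ∑ i, r i ^ 2)
    (T₄ := ∑ i, r i ^ (2 * 2)) (Tp := ∑ i, r i ^ p) (Tp1 := ∑ i, r i ^ (p + 1))
    (S₁ := resolventPow z X 1) (Sp := resolventPow z X p) (a := a) (δ := δ) (ζ := ζ) (η := η)
    (θ := θ) (c₀ := c₀)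
    hκ hκ1 hD hDk ha hζ hη hc₀ hδ hθ
    (by
      rw [hK, Finset.sum_div]
      exact Finset.sum_le_sum fun i _ => by rw [pow_one]; exact hrζ i)
    (by
      rw [hK, Finset.sum_div]
      refine Finset.sum_le_sum fun i _ => ?_
      rw [← _root_.one_div_pow]
      have := hrζ i
      gcongr)
    (Finset.sum_nonneg fun i _ => pow_nonneg (hr0 i).le _)
    (Finset.sum_nonneg fun i _ => pow_nonneg (hr0 i).le _)
    (Finset.sum_nonneg fun i _ => pow_nonneg (hr0 i).le _)
    (resolventPow_nonneg hzX p)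
    (by
      rw [Finset.mul_sum]
      refine Finset.sum_le_sum fun i _ => ?_
      have := hr0 i
      rw [pow_one, sq]
      gcongr
      exact hrρ i)
    (by
      rw [Finset.mul_sum]
      refine Finset.sum_le_sum fun i _ => ?_
      have := hr0 i
      rw [two_mul, pow_add]
      gcongr
      exact hrρ i)
    (by
      rw [hSq, Finset.mul_sum, ← Finset.sum_add_distrib]
      refine Finset.sum_le_sum fun i _ => ?_
      have := inv_sub_pow_le hδ0 (u := z - lam i) (by nlinarith [hsmall i]) (hu0 i) 1
      rw [Nat.cast_one, one_mul] at this
      exact this)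
    (by
      refine le_trans ?_ (mul_le_mul_of_nonneg_left hSa (by linarith))
      rw [hSq, Finset.mul_sum]
      refine Finset.sum_le_sum fun i _ => ?_
      rw [pow_one, pow_one]
      exact (hb i).2.2)
    hSa
    (by
      rw [hSq, Finset.mul_sum, ← Finset.sum_add_distrib]
      refine Finset.sum_le_sum fun i _ => ?_
      exact inv_sub_pow_le hδ0 (u := z - lam i) (by nlinarith [hsmall i]) (hu0 i) p)
    (by
      rw [hSq, Finset.mul_sum]
      refine Finset.sum_le_sum fun i _ => ?_
      exact inv_sub_pow_le_two hδ0 (by omega) (hpδ.trans (hsmall i)) (hu0 i))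
    (fun s => (hest s).1)
    (fun q s => Finset.sum_nonneg fun i _ =>
      mul_nonneg (pow_nonneg (hr0 i).le _) (Complex.normSq_nonneg _))
    (by
      intro s
      calc f (p + 1) s ≤ ∑ i, (2 / η) ^ (p + 1) * Complex.normSq ((Vᴴ *ᵥ signVec s) i) := by
            refine Finset.sum_le_sum fun i _ => ?_
            have h1 := hr0 i
            have h2 := hrρ i
            have h3 := Complex.normSq_nonneg ((Vᴴ *ᵥ signVec s) i)
            gcongr
        _ = _ := by rw [← Finset.mul_sum, hwsum, mul_one])
    (havg p) (havg (p + 1)) hdev1 (hdev 2)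
    hΦ
    (fun s => resolventPow_nonneg (hest s).2.1 p)
    hΨ
    hfrac1 (fun s => hfrac s (hest s).2.1)

/-- Existence of a finite family of rotations such that, for every positive matrix below the
barrier, most rotated corners lie below `c`. -/
theorem exists_rotation_family {d p : ℕ} (hd : 0 < d) (hp : 2 ≤ p) {κ a ζ η δ θ c : ℝ}
    (hκ : 0 < κ) (hκ1 : κ ≤ 1) (ha : 0 < a) (hζ : 0 < ζ) (hη : 0 < η)
    (hδ : δ = (1 - κ) / a) (hδη : 16 * δ ≤ κ * η) (hpδ : 2 * p * δ ≤ η)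
    (hθ : θ = 4 * p ^ 2 * a ^ 2 * ζ ^ 2 / (κ * d ^ 2)) (j : ℕ) (hj : c + j * δ ≤ ζ) :
    ∃ (I : Type) (_ : Fintype I) (_ : Nonempty I) (U : I → Matrix (Fin (d + j)) (Fin (d + j)) ℂ),
      (∀ i, (U i)ᴴ * U i = 1) ∧ ∀ X : Matrix (Fin (d + j)) (Fin (d + j)) ℂ, X.PosSemidef →
        (((c + j * δ : ℝ) : ℂ) • (1 : Matrix (Fin (d + j)) (Fin (d + j)) ℂ) - X).PosDef →
        resolventPow (c + j * δ) X 1 ≤ a →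
        badFrac c U X ≤ η ^ p * resolventPow (c + j * δ) X p
            * Real.exp (θ * resolventPow (c + j * δ) X 1 / a)
          + j * stepLoss p (κ / 8) η ζ d θ := by
  have hδ0 : 0 ≤ δ := by rw [hδ]; exact div_nonneg (by linarith) ha.le
  have hθ0 : 0 ≤ θ := by rw [hθ]; positivity
  have hd' : (0 : ℝ) < d := by exact_mod_cast hd
  have hloss0 : 0 ≤ stepLoss p (κ / 8) η ζ d θ := by unfold stepLoss badProb; positivity
  induction j with
  | zero =>
    refine ⟨Unit, inferInstance, inferInstance, fun _ => 1, fun _ => by simp, ?_⟩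
    intro X _ hX _
    have h0 : badFrac (j := 0) c (fun _ : Unit => 1) X = 0 := by
      have h1 : corner 0 (1 * X * 1ᴴ) = X := by
        rw [conjTranspose_one, Matrix.mul_one, Matrix.one_mul]; rfl
      have h2 : ((c : ℂ) • (1 : Matrix (Fin d) (Fin d) ℂ) - corner 0 (1 * X * 1ᴴ)).PosDef := by
        rw [h1]
        simpa only [Nat.cast_zero, zero_mul, add_zero] using hX
      unfold badFrac
      simp only [if_pos h2]
      simp
    rw [h0]
    have := resolventPow_nonneg hX p
    simp only [Nat.cast_zero, zero_mul, add_zero] at this ⊢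
    positivity
  | succ j ih =>
    obtain ⟨I, _, _, U, hU, hIH⟩ := ih (by push_cast at hj; nlinarith)
    have hk : 0 < d + j + 1 := by omega
    have hWex : ∀ s : Fin (d + j + 1) → Bool, ∃ W : Matrix (Fin (d + j + 1)) (Fin (d + j + 1)) ℂ,
        Wᴴ * W = 1 ∧ W * Wᴴ = 1 ∧ ∀ i, Wᴴ i (Fin.last (d + j)) = signVec s i := by
      intro s
      obtain ⟨Q, h1, h2, h3⟩ := exists_unitary_col (signVec_norm hk s) (Fin.last (d + j))
      exact ⟨Qᴴ, by rwa [conjTranspose_conjTranspose], by rwa [conjTranspose_conjTranspose],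
        by simpa using h3⟩
    choose W hW hW' hWv using hWex
    refine ⟨I × (Fin (d + j + 1) → Bool), inferInstance, inferInstance,
      fun q => extendOne (U q.1) * W q.2, ?_, ?_⟩
    · rintro ⟨i, s⟩
      calc (extendOne (U i) * W s)ᴴ * (extendOne (U i) * W s)
          = (W s)ᴴ * ((extendOne (U i))ᴴ * extendOne (U i)) * W s := by
            rw [conjTranspose_mul]; simp only [Matrix.mul_assoc]
        _ = 1 := by rw [extendOne_unitary (hU i), Matrix.mul_one]; exact hW s
    intro X hX hzX hSa
    have hzδ : c + ((j + 1 : ℕ) : ℝ) * δ - δ = c + j * δ := by push_cast; ring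
    have hmain := rotation_step (k := d + j) (D := d) hp hκ hκ1 ha hζ hη hd'
      (by exact_mod_cast (by omega : d ≤ d + j + 1))
      (by positivity : 0 ≤ j * stepLoss p (κ / 8) η ζ d θ) hδ hδη hpδ hθ hj hW hW' hWv hX hzX hSa
      (frac := fun s => badFrac c U (dropLast (W s) X)) (fun s => badFrac_le_one _ _ _)
      (by
        intro s h1 hs
        simp only [hzδ] at hs h1 ⊢
        exact hIH _ (dropLast_posSemidef hX) h1 hs)
    refine (badFrac_extend c U W X).trans_le (hmain.trans (le_of_eq ?_))
    push_cast
    ring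

/-! ### Bounds on resolvent power sums and the resulting rate -/

section spectral
variable {ι : Type*} [DecidableEq ι] {X : Matrix ι ι ℂ}

lemma posDef_smul_one_sub {β ζ : ℝ} (hβζ : β < ζ)
    (hβ : ((β : ℂ) • (1 : Matrix ι ι ℂ) - X).PosSemidef) :
    ((ζ : ℂ) • (1 : Matrix ι ι ℂ) - X).PosDef := by
  have h1 : (((ζ - β : ℝ) : ℂ) • (1 : Matrix ι ι ℂ)).PosDef :=
    Matrix.PosDef.one.smul (by exact_mod_cast sub_pos.mpr hβζ)
  have h2 : (ζ : ℂ) • (1 : Matrix ι ι ℂ) - X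
      = ((ζ - β : ℝ) : ℂ) • (1 : Matrix ι ι ℂ) + ((β : ℂ) • (1 : Matrix ι ι ℂ) - X) := by
    push_cast; rw [sub_smul]; abel
  rw [h2]
  exact h1.add_posSemidef hβ

variable [Fintype ι]

lemma exists_spectrum_between {β : ℝ} (hX : X.PosSemidef)
    (hβ : ((β : ℂ) • (1 : Matrix ι ι ℂ) - X).PosSemidef) :
    ∃ V : Matrix ι ι ℂ, ∃ lam : ι → ℝ, Vᴴ * V = 1 ∧ V * Vᴴ = 1 ∧ X = conjDiag V lam ∧
      ∀ i, lam i ≤ β := by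
  obtain ⟨V, lam, hV, hV', hXV⟩ := exists_eq_conjDiag hX.1
  refine ⟨V, lam, hV, hV', hXV, fun i => ?_⟩
  rw [hXV, conjDiag_sub hV'] at hβ
  have := nonneg_of_conjDiag_posSemidef hV hβ i
  linarith

lemma resolventPow_le {β ζ : ℝ} (hβζ : β < ζ) (hX : X.PosSemidef)
    (hβ : ((β : ℂ) • (1 : Matrix ι ι ℂ) - X).PosSemidef) (q : ℕ) :
    resolventPow ζ X q ≤ Fintype.card ι * ((ζ - β)⁻¹) ^ q := by
  obtain ⟨V, lam, hV, hV', rfl, hlam⟩ := exists_spectrum_between hX hβ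
  rw [resolventPow_conjDiag hV hV' (fun i => by linarith [hlam i])]
  calc _ ≤ ∑ _i : ι, ((ζ - β)⁻¹) ^ q := Finset.sum_le_sum fun i _ => by
        have h1 : 0 < ζ - β := by linarith
        have h2 := hlam i
        have h3 : 0 < ζ - lam i := by linarith
        gcongr
    _ = _ := by simp

/-- The first resolvent sum is controlled by the first two moments and the largest eigenvalue. -/
lemma resolventPow_one_le {β ζ m : ℝ} (hβζ : β < ζ) (hmζ : m < ζ) (hX : X.PosSemidef)
    (hβ : ((β : ℂ) • (1 : Matrix ι ι ℂ) - X).PosSemidef) :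
    resolventPow ζ X 1 ≤ Fintype.card ι / (ζ - m)
      + (X.trace.re - Fintype.card ι * m) / (ζ - m) ^ 2
      + ((X * X).trace.re - 2 * m * X.trace.re + Fintype.card ι * m ^ 2)
        / ((ζ - m) ^ 2 * (ζ - β)) := by
  obtain ⟨V, lam, hV, hV', rfl, hlam⟩ := exists_spectrum_between hX hβ
  rw [resolventPow_conjDiag hV hV' (fun i => by linarith [hlam i]), conjDiag_mul hV,
    conjDiag_trace hV, conjDiag_trace hV, Complex.ofReal_re, Complex.ofReal_re]
  have hw : 0 < ζ - m := by linarith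
  have hg : 0 < ζ - β := by linarith
  calc ∑ i, ((ζ - lam i)⁻¹) ^ 1
      ≤ ∑ i, (1 / (ζ - m) + (lam i - m) / (ζ - m) ^ 2
        + (lam i * lam i - 2 * m * lam i + m ^ 2) / ((ζ - m) ^ 2 * (ζ - β))) := by
        refine Finset.sum_le_sum fun i _ => ?_
        have h3 : 0 < ζ - lam i := by linarith [hlam i]
        have h4 : ((ζ - lam i)⁻¹) ^ 1 = 1 / (ζ - m) + (lam i - m) / (ζ - m) ^ 2
            + (lam i - m) ^ 2 / ((ζ - m) ^ 2 * (ζ - lam i)) := by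
          field_simp; ring
        have h5 : lam i * lam i - 2 * m * lam i + m ^ 2 = (lam i - m) ^ 2 := by ring
        rw [h4, h5]
        have := hlam i
        gcongr
    _ = _ := by
        rw [Finset.sum_add_distrib, Finset.sum_add_distrib, ← Finset.sum_div, ← Finset.sum_div,
          ← Finset.sum_div, Finset.sum_sub_distrib, Finset.sum_add_distrib, Finset.sum_sub_distrib,
          ← Finset.mul_sum]
        simp

end spectral

/-- The per-dimension failure bound in terms of `x = d ^ (1/8)`. -/
lemma failure_bound {n d : ℕ} {x β ζ κ θ : ℝ} (hx : 1 ≤ x) (hxd : x ^ 8 = d) (hζ : 0 < ζ)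
    (hκ : 0 < κ) (hβζ : β < ζ) :
    (x⁻¹) ^ 24 * ((n * d : ℝ) * ((ζ - β)⁻¹) ^ 24) * Real.exp θ
        + ((n - 1 : ℕ) * d : ℝ) * stepLoss 24 (κ / 8) (x⁻¹) ζ d θ
      ≤ (n * ((ζ - β)⁻¹) ^ 24 * Real.exp θ + n * (9 ^ 8 * 16 / (κ / 8) ^ 8
          * (2 ^ 4 * ζ ^ 4 + 2 ^ 8 * ζ ^ 8) * (1 + Real.exp θ * (24 * ζ * 2 ^ 25))))
        * (x⁻¹) ^ 15 := by
  have hx0 : 0 < x := by linarith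
  have hg : 0 < ζ - β := by linarith
  set y := x⁻¹ with hy
  have hxy : x * y = 1 := mul_inv_cancel₀ hx0.ne'
  have hy0 : 0 < y := inv_pos.mpr hx0
  have hy1 : y ≤ 1 := inv_le_one_of_one_le₀ hx
  have hdy : (d : ℝ) * y ^ 8 = 1 := by rw [← hxd, ← mul_pow, hxy, one_pow]
  rw [add_mul]
  refine add_le_add ?_ ?_
  · calc y ^ 24 * ((n * d : ℝ) * ((ζ - β)⁻¹) ^ 24) * Real.exp θ
        = n * ((ζ - β)⁻¹) ^ 24 * Real.exp θ * (y ^ 16 * (d * y ^ 8)) := by ring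
      _ = n * ((ζ - β)⁻¹) ^ 24 * Real.exp θ * (y ^ 16) := by rw [hdy, mul_one]
      _ ≤ _ := by
        gcongr ?_ * ?_
        exact pow_le_pow_of_le_one hy0.le hy1 (by norm_num)
  · have h1 : 2 / y = 2 * x := by rw [hy, div_inv_eq_mul]
    have hd0 : (0 : ℝ) < d := by rw [← hxd]; positivity
    have hn : ((n - 1 : ℕ) : ℝ) ≤ n := by exact_mod_cast Nat.sub_le n 1
    have h2 : badProb (κ / 8) (2 / y) ζ d
        ≤ 9 ^ 8 * 16 / (κ / 8) ^ 8 * (2 ^ 4 * ζ ^ 4 + 2 ^ 8 * ζ ^ 8) * y ^ 24 := by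
      have h4 : (1 : ℝ) / d ^ 4 = y ^ 32 := by
        rw [div_eq_iff (by positivity)]
        calc (1 : ℝ) = (d * y ^ 8) ^ 4 := by rw [hdy, one_pow]
          _ = _ := by ring
      rw [badProb, h1, div_eq_mul_one_div _ ((d : ℝ) ^ 4), h4]
      have h5 : (2 * x) ^ 4 * ζ ^ 4 + (2 * x) ^ 8 * ζ ^ 8
          ≤ (2 ^ 4 * ζ ^ 4 + 2 ^ 8 * ζ ^ 8) * x ^ 8 := by
        have : x ^ 4 ≤ x ^ 8 := pow_le_pow_right₀ hx (by norm_num)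
        calc _ = 2 ^ 4 * ζ ^ 4 * x ^ 4 + 2 ^ 8 * ζ ^ 8 * x ^ 8 := by ring
          _ ≤ 2 ^ 4 * ζ ^ 4 * x ^ 8 + 2 ^ 8 * ζ ^ 8 * x ^ 8 := by gcongr
          _ = _ := by ring
      calc 9 ^ 8 * 16 / (κ / 8) ^ 8 * ((2 * x) ^ 4 * ζ ^ 4 + (2 * x) ^ 8 * ζ ^ 8) * y ^ 32
          ≤ 9 ^ 8 * 16 / (κ / 8) ^ 8 * ((2 ^ 4 * ζ ^ 4 + 2 ^ 8 * ζ ^ 8) * x ^ 8) * y ^ 32 := by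
            gcongr
        _ = 9 ^ 8 * 16 / (κ / 8) ^ 8 * (2 ^ 4 * ζ ^ 4 + 2 ^ 8 * ζ ^ 8) * y ^ 24 * (x * y) ^ 8 := by
            ring
        _ = _ := by rw [hxy, one_pow, mul_one]
    have h3 : 1 + Real.exp θ * ((24 : ℕ) * ζ * 2 ^ (24 + 1) / y)
        ≤ (1 + Real.exp θ * (24 * ζ * 2 ^ 25)) * x := by
      rw [hy, div_inv_eq_mul]
      push_cast
      nlinarith
    have hb0 : 0 ≤ badProb (κ / 8) (2 / y) ζ d := by unfold badProb; positivity
    rw [stepLoss]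
    calc ((n - 1 : ℕ) * d : ℝ) * (badProb (κ / 8) (2 / y) ζ d
          * (1 + Real.exp θ * ((24 : ℕ) * ζ * 2 ^ (24 + 1) / y)))
        ≤ (n * d : ℝ) * ((9 ^ 8 * 16 / (κ / 8) ^ 8 * (2 ^ 4 * ζ ^ 4 + 2 ^ 8 * ζ ^ 8) * y ^ 24)
          * ((1 + Real.exp θ * (24 * ζ * 2 ^ 25)) * x)) := by gcongr
      _ = n * (9 ^ 8 * 16 / (κ / 8) ^ 8 * (2 ^ 4 * ζ ^ 4 + 2 ^ 8 * ζ ^ 8)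
          * (1 + Real.exp θ * (24 * ζ * 2 ^ 25))) * y ^ 15 * ((d * y ^ 8) * (x * y)) := by ring
      _ = _ := by rw [hdy, hxy]; ring

/-- A family of rotations whose proportion of bad corners is summable in the dimension. -/
theorem exists_rotation_family_rate {n : ℕ} (hn : 2 ≤ n) {κ g ζ β : ℝ} (hκ : 0 < κ) (hκ1 : κ ≤ 1)
    (hg : 0 < g) (hζ : 0 < ζ) (hβζ : β < ζ) :
    ∃ τ : ℕ → ℝ, (∀ d, 0 ≤ τ d) ∧ Summable τ ∧ ∀ᶠ d : ℕ in atTop,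
      ∃ (I : Type) (_ : Fintype I) (_ : Nonempty I)
      (U : I → Matrix (Fin (d + (n - 1) * d)) (Fin (d + (n - 1) * d)) ℂ),
      (∀ i, (U i)ᴴ * U i = 1) ∧
      ∀ X : Matrix (Fin (d + (n - 1) * d)) (Fin (d + (n - 1) * d)) ℂ, X.PosSemidef →
        ((β : ℂ) • (1 : Matrix (Fin (d + (n - 1) * d)) (Fin (d + (n - 1) * d)) ℂ) - X).PosSemidef →
        resolventPow ζ X 1 ≤ g * (n * d) →
        badFrac (ζ - (1 - 1 / (n : ℝ)) * ((1 - κ) / g)) U X ≤ τ d := by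
  have hn0 : (0 : ℝ) < n := by exact_mod_cast (by omega : 0 < n)
  set θ : ℝ := 4 * ((24 : ℕ) : ℝ) ^ 2 * (g * n) ^ 2 * ζ ^ 2 / κ with hθ
  set C : ℝ := n * ((ζ - β)⁻¹) ^ 24 * Real.exp θ + n * (9 ^ 8 * 16 / (κ / 8) ^ 8
          * (2 ^ 4 * ζ ^ 4 + 2 ^ 8 * ζ ^ 8) * (1 + Real.exp θ * (24 * ζ * 2 ^ 25))) with hC
  refine ⟨fun d => C * (d : ℝ) ^ (-(15 / 8 : ℝ)), fun d => by positivity, ?_, ?_⟩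
  · exact (Real.summable_nat_rpow.mpr (by norm_num)).mul_left C
  have hlim : Tendsto (fun d : ℕ => (d : ℝ) ^ (1 / 8 : ℝ)) atTop atTop :=
    (tendsto_rpow_atTop (by norm_num)).comp tendsto_natCast_atTop_atTop
  filter_upwards [hlim.eventually_ge_atTop 1, eventually_ge_atTop 1,
    hlim.eventually_ge_atTop (16 * ((1 - κ) / (g * n)) / κ),
    hlim.eventually_ge_atTop (48 * ((1 - κ) / (g * n)))] with d hx1 hd hx2 hx3
  have hd0 : (0 : ℝ) < d := by exact_mod_cast hd
  set x := (d : ℝ) ^ (1 / 8 : ℝ) with hx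
  have hx0 : 0 < x := by linarith
  have hxd : x ^ 8 = d := by
    rw [hx, ← Real.rpow_natCast, ← Real.rpow_mul hd0.le]; norm_num
  have hx15 : (d : ℝ) ^ (-(15 / 8 : ℝ)) = (x⁻¹) ^ 15 := by
    rw [hx, inv_pow, ← Real.rpow_natCast, ← Real.rpow_mul hd0.le, Real.rpow_neg hd0.le]; norm_num
  set δ : ℝ := (1 - κ) / (g * (n * d)) with hδ
  have hδx : δ = (1 - κ) / (g * n) * (x⁻¹) ^ 8 := by
    rw [inv_pow, hxd, hδ]; field_simp
  have hL0 : 0 ≤ (1 - κ) / (g * n) := div_nonneg (by linarith) (by positivity)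
  have hy78 : (x⁻¹) ^ 8 ≤ (x⁻¹) ^ 2 :=
    pow_le_pow_of_le_one (by positivity) (inv_le_one_of_one_le₀ hx1) (by norm_num)
  have hxi : x * x⁻¹ = 1 := mul_inv_cancel₀ hx0.ne'
  have hδ2 : δ ≤ (1 - κ) / (g * n) * (x⁻¹) ^ 2 := by rw [hδx]; gcongr
  have hxi0 : 0 < x⁻¹ := inv_pos.mpr hx0
  have hJ : ζ - (1 - 1 / (n : ℝ)) * ((1 - κ) / g) + (((n - 1) * d : ℕ) : ℝ) * δ = ζ := by
    rw [hδ]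
    push_cast [Nat.cast_sub (by omega : 1 ≤ n)]
    field_simp
    ring
  have hfam := exists_rotation_family (d := d) (p := 24) (κ := κ) (a := g * (n * d)) (ζ := ζ)
    (η := x⁻¹) (δ := δ) (θ := θ) (c := ζ - (1 - 1 / (n : ℝ)) * ((1 - κ) / g)) hd (by norm_num)
    hκ hκ1 (by positivity) hζ hxi0 hδ
    (by
      have h1 : 16 * ((1 - κ) / (g * n)) ≤ x * κ := (div_le_iff₀ hκ).mp hx2
      calc 16 * δ ≤ 16 * ((1 - κ) / (g * n)) * (x⁻¹) ^ 2 := by linarith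
        _ ≤ (x * κ) * (x⁻¹) ^ 2 := by gcongr
        _ = κ * x⁻¹ * (x * x⁻¹) := by ring
        _ = _ := by rw [hxi, mul_one])
    (by
      calc 2 * ((24 : ℕ) : ℝ) * δ ≤ 48 * ((1 - κ) / (g * n)) * (x⁻¹) ^ 2 := by
            push_cast; linarith
        _ ≤ x * (x⁻¹) ^ 2 := by gcongr
        _ = x⁻¹ * (x * x⁻¹) := by ring
        _ = _ := by rw [hxi, mul_one])
    (by rw [hθ]; field_simp) ((n - 1) * d) hJ.le
  obtain ⟨I, hI, hI', U, hU, hbad⟩ := hfam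
  refine ⟨I, hI, hI', U, hU, fun X hX hβ hS => ?_⟩
  simp only [hJ] at hbad
  refine (hbad X hX (posDef_smul_one_sub hβζ hβ) hS).trans ?_
  rw [hx15]
  refine le_trans ?_ (failure_bound (n := n) hx1 hxd hζ hκ hβζ)
  have hcard : (Fintype.card (Fin (d + (n - 1) * d)) : ℝ) = n * d := by
    rw [Fintype.card_fin]
    push_cast [Nat.cast_sub (by omega : 1 ≤ n)]
    ring
  have h1 := resolventPow_le hβζ hX hβ 24
  rw [hcard] at h1
  have h2 := resolventPow_nonneg (posDef_smul_one_sub hβζ hβ) 24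
  have hθ0 : 0 ≤ θ := by rw [hθ]; positivity
  have h3 : θ * resolventPow ζ X 1 / (g * (n * d)) ≤ θ := by
    rw [mul_div_assoc]
    exact mul_le_of_le_one_right hθ0 (div_le_one_of_le₀ hS (by positivity))
  push_cast
  gcongr

/-! ### Choice of parameters -/

/-- The edge of the compressed spectrum predicted by the barrier argument, with slack `ε`. -/
def barrierEdge (n : ℕ) (B m σ s ε : ℝ) : ℝ :=
  B + s - (1 - 1 / (n : ℝ)) * ((1 - ε) / (1 / (B + s - m) + ε / (B + s - m) ^ 2
    + (σ ^ 2 + (1 + 2 * m) * ε) / ((B + s - m) ^ 2 * (s - ε))))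

lemma barrierEdge_zero {n : ℕ} (hn : 2 ≤ n) {B m σ s : ℝ} (hw : 0 < B + s - m)
    (hs : 0 < s) (hsσ : s ^ 2 = σ ^ 2 * ((n : ℝ) - 1)) (hσ : 0 < σ) :
    barrierEdge n B m σ s 0 = m + (B + s - m) / n
      + (B + s - m) * s ^ 2 / (n * ((B + s - m) * s + σ ^ 2)) := by
  have hn0 : (0 : ℝ) < n := by exact_mod_cast (by omega : 0 < n)
  set w := B + s - m with hwdef
  have : B + s = m + w := by rw [hwdef]; ring
  rw [barrierEdge, ← hwdef, this, hsσ]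
  simp only [mul_zero, add_zero, sub_zero, zero_div]
  field_simp
  ring

lemma barrierEdge_zero_lt {n : ℕ} (hn : 2 ≤ n) {B m σ s : ℝ} (hmB : m ≤ B)
    (hs : 0 < s) (hsσ : s ^ 2 = σ ^ 2 * ((n : ℝ) - 1)) (hσ : 0 < σ)
    (hcond : B - m + 2 * s < n * σ ^ 2 / m) :
    barrierEdge n B m σ s 0 < m + σ ^ 2 / m := by
  have hn0 : (0 : ℝ) < n := by exact_mod_cast (by omega : 0 < n)
  have h1 := barrierEdge_zero hn (by linarith : 0 < B + s - m) hs hsσ hσ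
  set w := B + s - m with hw
  have hw0 : 0 < w := by rw [hw]; linarith
  have h2 : w * s ^ 2 / (n * (w * s + σ ^ 2)) ≤ s / n := by
    rw [div_le_div_iff₀ (by positivity) hn0]
    have : 0 < s * n * σ ^ 2 := by positivity
    nlinarith
  have h3 : (B - m + 2 * s) / n < σ ^ 2 / m := by
    rw [div_lt_iff₀ hn0]
    calc _ < _ := hcond
      _ = _ := by ring
  calc barrierEdge n B m σ s 0 ≤ m + w / n + s / n := by rw [h1]; linarith
    _ = m + (B - m + 2 * s) / n := by rw [hw]; ring
    _ < _ := by linarith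

lemma exists_slack {n : ℕ} (hn : 2 ≤ n) {B m σ s : ℝ} (hm : 0 < m) (hmB : m ≤ B)
    (hs : 0 < s) (hsσ : s ^ 2 = σ ^ 2 * ((n : ℝ) - 1)) (hσ : 0 < σ)
    (hcond : B - m + 2 * s < n * σ ^ 2 / m) :
    ∃ ε : ℝ, 0 < ε ∧ ε ≤ 1 ∧ ε < s ∧
      0 < (1 + ε) * barrierEdge n B m σ s ε + (ε ^ 2 + ε) * (B + ε) ∧
      ((1 + ε) * barrierEdge n B m σ s ε + (ε ^ 2 + ε) * (B + ε)) * (m + ε)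
        < m ^ 2 + σ ^ 2 - ε := by
  have hw0 : 0 < B + s - m := by linarith
  have hedge : ContinuousAt (fun ε => barrierEdge n B m σ s ε) 0 := by
    unfold barrierEdge
    refine continuousAt_const.sub (continuousAt_const.mul (ContinuousAt.div (by fun_prop) ?_ ?_))
    · refine ContinuousAt.add (by fun_prop) (ContinuousAt.div (by fun_prop) (by fun_prop) ?_)
      rw [sub_zero]; positivity
    · simp only [mul_zero, add_zero, sub_zero, zero_div]; positivity
  have hpos : 0 < (1 + 0) * barrierEdge n B m σ s 0 + (0 ^ 2 + 0) * (B + 0) := by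
    have hn0 : (0 : ℝ) < n := by exact_mod_cast (by omega : 0 < n)
    have : 0 < barrierEdge n B m σ s 0 := by
      rw [barrierEdge_zero hn hw0 hs hsσ hσ]; positivity
    simpa using this
  have hc0 : ContinuousAt
      (fun ε => (1 + ε) * barrierEdge n B m σ s ε + (ε ^ 2 + ε) * (B + ε)) 0 := by
    fun_prop
  have hc : ContinuousAt (fun ε => ((1 + ε) * barrierEdge n B m σ s ε + (ε ^ 2 + ε) * (B + ε))
      * (m + ε) + ε) 0 := by fun_prop
  have hv : ((1 + 0) * barrierEdge n B m σ s 0 + (0 ^ 2 + 0) * (B + 0)) * (m + 0) + 0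
      < m ^ 2 + σ ^ 2 := by
    have := barrierEdge_zero_lt hn hmB hs hsσ hσ hcond
    have h2 : barrierEdge n B m σ s 0 * m < (m + σ ^ 2 / m) * m := by gcongr
    have h3 : (m + σ ^ 2 / m) * m = m ^ 2 + σ ^ 2 := by field_simp
    rw [h3] at h2
    simpa using h2
  have h1 := (hc.eventually (eventually_lt_nhds hv)).and
    ((hc0.eventually (eventually_gt_nhds hpos)).and
      ((eventually_lt_nhds one_pos).and (eventually_lt_nhds hs)))
  obtain ⟨ε, ⟨h2, h3, h4, h5⟩, h6⟩ :=
    ((h1.filter_mono nhdsWithin_le_nhds).and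
      (self_mem_nhdsWithin : Set.Ioi (0 : ℝ) ∈ 𝓝[>] 0)).exists
  exact ⟨ε, h6, h4.le, h5, h3, by linarith⟩

/-! ### Separable matrices -/

/-- The product vector `a ⊗ v`. -/
def prodVec {n d : ℕ} (a : Fin n → ℂ) (v : Fin d → ℂ) : Fin n × Fin d → ℂ :=
  fun p => a p.1 * v p.2

lemma trace_mul_kronecker_le {n d : ℕ} {X : Matrix (Fin n × Fin d) (Fin n × Fin d) ℂ} {h : ℝ}
    (hX : ∀ a v, star a ⬝ᵥ a = 1 → star v ⬝ᵥ v = 1 → quadRe X (prodVec a v) ≤ h)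
    {P : Matrix (Fin n) (Fin n) ℂ} {Q : Matrix (Fin d) (Fin d) ℂ} (hP : P.PosSemidef)
    (hQ : Q.PosSemidef) : (X * (P ⊗ₖ Q)).trace.re ≤ h * (P ⊗ₖ Q).trace.re := by
  obtain ⟨V, f, hV, hV', rfl⟩ := exists_eq_conjDiag hP.1
  obtain ⟨W, g, hW, hW', rfl⟩ := exists_eq_conjDiag hQ.1
  have hf := nonneg_of_conjDiag_posSemidef hV hP
  have hg := nonneg_of_conjDiag_posSemidef hW hQ
  have hcol : ∀ {k : ℕ} {V : Matrix (Fin k) (Fin k) ℂ}, Vᴴ * V = 1 → ∀ i,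
      star (fun j => V j i) ⬝ᵥ (fun j => V j i) = 1 := by
    intro k V hV i
    have := congrFun (congrFun hV i) i
    rw [Matrix.one_apply_eq] at this
    exact this
  have h1 : (X * (conjDiag V f ⊗ₖ conjDiag W g)).trace
      = ∑ p : Fin n × Fin d, ((V ⊗ₖ W)ᴴ * X * (V ⊗ₖ W)) p p * ((f p.1 * g p.2 : ℝ) : ℂ) := by
    rw [conjDiag, conjDiag, mul_kronecker_mul, mul_kronecker_mul, diagonal_kronecker_diagonal,
      ← conjTranspose_kronecker, ← Matrix.mul_assoc, Matrix.trace_mul_comm, ← Matrix.mul_assoc,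
      ← Matrix.mul_assoc, Matrix.trace]
    simp [Matrix.mul_diagonal]
  have h2 : (conjDiag V f ⊗ₖ conjDiag W g).trace.re = ∑ p : Fin n × Fin d, f p.1 * g p.2 := by
    rw [trace_kronecker, conjDiag_trace hV, conjDiag_trace hW, ← Complex.ofReal_mul,
      Complex.ofReal_re, Fintype.sum_prod_type, Finset.sum_mul_sum]
  rw [h1, h2, Complex.re_sum, Finset.mul_sum]
  refine Finset.sum_le_sum fun p _ => ?_
  rw [Complex.re_mul_ofReal]
  refine mul_le_mul_of_nonneg_right ?_ (mul_nonneg (hf _) (hg _))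
  refine le_trans (le_of_eq ?_) (hX _ _ (hcol hV p.1) (hcol hW p.2))
  rw [quadRe, Matrix.mul_assoc]
  rfl

/-- A separable matrix whose quadratic form is at most `h` on product unit vectors satisfies
`Tr X² ≤ h Tr X`. -/
lemma trace_sq_le_of_mem_SEP {n d : ℕ} {X : Matrix (Fin n × Fin d) (Fin n × Fin d) ℂ} {h : ℝ}
    (hX : ∀ a v, star a ⬝ᵥ a = 1 → star v ⬝ᵥ v = 1 → quadRe X (prodVec a v) ≤ h)
    (hS : X ∈ SEP n d) : (X * X).trace.re ≤ h * X.trace.re := by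
  obtain ⟨k, P, Q, hP, hQ, hXs⟩ := hS
  have h1 : (X * X).trace.re = ∑ i, (X * (P i ⊗ₖ Q i)).trace.re := by
    rw [← Complex.re_sum, ← Matrix.trace_sum, ← Matrix.mul_sum, ← hXs]
  have h2 : X.trace.re = ∑ i, (P i ⊗ₖ Q i).trace.re := by
    conv_lhs => rw [hXs]
    rw [Matrix.trace_sum, Complex.re_sum]
  rw [h1, h2, Finset.mul_sum]
  exact Finset.sum_le_sum fun i _ => trace_mul_kronecker_le hX (hP i) (hQ i)

/-! ### Passing from a net to the whole sphere -/

lemma quadRe_nonneg {ι : Type*} [Fintype ι] {X : Matrix ι ι ℂ} (hX : X.PosSemidef) (v : ι → ℂ) :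
    0 ≤ quadRe X v := (Complex.nonneg_iff.mp (hX.dotProduct_mulVec_nonneg v)).1

lemma quadRe_add_le {ι : Type*} [Fintype ι] {X : Matrix ι ι ℂ} (hX : X.PosSemidef) {t : ℝ}
    (ht : 0 < t) (v w : ι → ℂ) :
    quadRe X (v + w) ≤ (1 + t) * quadRe X v + (1 + t⁻¹) * quadRe X w := by
  have h0 := quadRe_nonneg hX ((t : ℂ) • v - w)
  have h1 : quadRe X ((t : ℂ) • v - w) = t ^ 2 * quadRe X v
      - t * ((star v ⬝ᵥ (X *ᵥ w)).re + (star w ⬝ᵥ (X *ᵥ v)).re) + quadRe X w := by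
    simp only [quadRe, star_sub, star_smul, Matrix.mulVec_sub, Matrix.mulVec_smul,
      sub_dotProduct, dotProduct_sub, smul_dotProduct, dotProduct_smul]
    simp
    ring
  have h2 : quadRe X (v + w) = quadRe X v
      + ((star v ⬝ᵥ (X *ᵥ w)).re + (star w ⬝ᵥ (X *ᵥ v)).re) + quadRe X w := by
    simp only [quadRe, star_add, Matrix.mulVec_add, add_dotProduct, dotProduct_add]
    simp
    ring
  rw [h1] at h0
  set x := (star v ⬝ᵥ (X *ᵥ w)).re + (star w ⬝ᵥ (X *ᵥ v)).re
  have h3 : x ≤ t * quadRe X v + t⁻¹ * quadRe X w := by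
    have h4 : t⁻¹ * (t * x) ≤ t⁻¹ * (t ^ 2 * quadRe X v + quadRe X w) := by
      gcongr; linarith
    calc x = t⁻¹ * (t * x) := by field_simp
      _ ≤ _ := h4
      _ = _ := by field_simp
  rw [h2]; linarith

lemma star_dotProduct_self_re {ι : Type*} [Fintype ι] (a : ι → ℂ) :
    star a ⬝ᵥ a = ((‖WithLp.toLp 2 a‖ ^ 2 : ℝ) : ℂ) := by
  rw [EuclideanSpace.norm_sq_eq, dotProduct]
  push_cast
  refine Finset.sum_congr rfl fun i _ => ?_
  simp [← Complex.conj_mul']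

lemma star_prodVec_dotProduct {n d : ℕ} (a : Fin n → ℂ) (v : Fin d → ℂ) :
    star (prodVec a v) ⬝ᵥ prodVec a v = (star a ⬝ᵥ a) * (star v ⬝ᵥ v) := by
  simp only [dotProduct, prodVec, Fintype.sum_prod_type, Finset.sum_mul_sum, Pi.star_apply,
    star_mul']
  refine Finset.sum_congr rfl fun i _ => Finset.sum_congr rfl fun j _ => by ring

lemma quadRe_le_of_posSemidef_sub {ι : Type*} [Fintype ι] [DecidableEq ι] {X : Matrix ι ι ℂ}
    {β : ℝ} (hβ : ((β : ℂ) • (1 : Matrix ι ι ℂ) - X).PosSemidef) (v : ι → ℂ) :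
    quadRe X v ≤ β * (star v ⬝ᵥ v).re := by
  have := quadRe_nonneg hβ v
  rw [quadRe, sub_mulVec, dotProduct_sub, smul_mulVec, one_mulVec, dotProduct_smul, smul_eq_mul,
    Complex.sub_re, Complex.re_ofReal_mul] at this
  rw [quadRe]; linarith

lemma quadRe_prodVec_le_of_net {n d : ℕ} {X : Matrix (Fin n × Fin d) (Fin n × Fin d) ℂ}
    {t c β : ℝ} (ht : 0 < t) (hβ0 : 0 ≤ β) (hX : X.PosSemidef)
    (hβ : ((β : ℂ) • (1 : Matrix (Fin n × Fin d) (Fin n × Fin d) ℂ) - X).PosSemidef)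
    {F : Set (EuclideanSpace ℂ (Fin n))}
    (hF : Metric.sphere (0 : EuclideanSpace ℂ (Fin n)) 1 ⊆ ⋃ x ∈ F, Metric.ball x t)
    (hc : ∀ x ∈ F, ∀ v : Fin d → ℂ, star v ⬝ᵥ v = 1 → quadRe X (prodVec (WithLp.ofLp x) v) ≤ c)
    (a : Fin n → ℂ) (v : Fin d → ℂ) (ha : star a ⬝ᵥ a = 1) (hv : star v ⬝ᵥ v = 1) :
    quadRe X (prodVec a v) ≤ (1 + t) * c + (t ^ 2 + t) * β := by
  have hmem : WithLp.toLp 2 a ∈ Metric.sphere (0 : EuclideanSpace ℂ (Fin n)) 1 := by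
    rw [star_dotProduct_self_re] at ha
    have h1 : ‖WithLp.toLp 2 a‖ ^ 2 = 1 := by exact_mod_cast ha
    rw [mem_sphere_zero_iff_norm]
    exact (pow_eq_one_iff_of_nonneg (norm_nonneg _) two_ne_zero).mp h1
  obtain ⟨x, hxF, hx⟩ := Set.mem_iUnion₂.mp (hF hmem)
  have hsplit : prodVec a v = prodVec (WithLp.ofLp x) v + prodVec (a - WithLp.ofLp x) v := by
    ext p; simp only [prodVec, Pi.add_apply, Pi.sub_apply]; ring
  have h1 := hc x hxF v hv
  have h2 : quadRe X (prodVec (a - WithLp.ofLp x) v) ≤ β * t ^ 2 := by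
    refine (quadRe_le_of_posSemidef_sub hβ _).trans ?_
    rw [star_prodVec_dotProduct, hv, mul_one, star_dotProduct_self_re, Complex.ofReal_re]
    have h3 : ‖WithLp.toLp 2 (a - WithLp.ofLp x)‖ ≤ t := by
      rw [Metric.mem_ball, dist_eq_norm] at hx
      exact hx.le
    gcongr
  rw [hsplit]
  refine (quadRe_add_le hX ht _ _).trans ?_
  calc _ ≤ (1 + t) * c + (1 + t⁻¹) * (β * t ^ 2) := by gcongr
    _ = _ := by field_simp

/-! ### Averaging over rotations -/

instance matrix_borelSpace {ι ι' : Type*} [Countable ι] [Countable ι'] :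
    BorelSpace (Matrix ι ι' ℂ) :=
  inferInstanceAs (BorelSpace (ι → ι' → ℂ))

lemma isClosed_setOf_posSemidef {ι : Type*} [Fintype ι] :
    IsClosed {X : Matrix ι ι ℂ | X.PosSemidef} := by
  simp only [posSemidef_iff_dotProduct_mulVec, IsHermitian, Set.ofPred_and, Set.ofPred_forall]
  refine (isClosed_eq (by fun_prop) continuous_id).inter (isClosed_iInter fun x => ?_)
  exact isClosed_le continuous_const
    (continuous_const.dotProduct (Continuous.matrix_mulVec continuous_id continuous_const))

open Classical in
/-- For a unitarily invariant random matrix, the probability of an event is bounded by the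
proportion of rotations that enter it. -/
lemma measureReal_le_of_rotations {ι Ω : Type*} [Fintype ι] [DecidableEq ι] [MeasurableSpace Ω]
    {ℙ : Measure Ω} [IsProbabilityMeasure ℙ] {Y : Ω → Matrix ι ι ℂ} (hY : Measurable Y)
    (hinv : ∀ U ∈ unitary (Matrix ι ι ℂ),
      Measure.map (fun ω => U * Y ω * star U) ℙ = Measure.map Y ℙ)
    {E : Set (Matrix ι ι ℂ)} (hE : MeasurableSet E) {I : Type} [Fintype I] [Nonempty I]
    {Z : I → Matrix ι ι ℂ} (hZ : ∀ i, Z i ∈ unitary (Matrix ι ι ℂ)) {τ : ℝ}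
    (h : ∀ ω, (∑ i, if Z i * Y ω * star (Z i) ∈ E then (1 : ℝ) else 0) / Fintype.card I ≤ τ) :
    ℙ.real {ω | Y ω ∈ E} ≤ τ := by
  have hmeas : ∀ i, Measurable fun ω => Z i * Y ω * star (Z i) := fun i =>
    (Continuous.measurable (by fun_prop : Continuous fun M : Matrix ι ι ℂ =>
      Z i * M * star (Z i))).comp hY
  have hset : ∀ i, MeasurableSet {ω | Z i * Y ω * star (Z i) ∈ E} := fun i => hmeas i hE
  have heq : ∀ i, ℙ.real {ω | Z i * Y ω * star (Z i) ∈ E} = ℙ.real {ω | Y ω ∈ E} := by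
    intro i
    have h1 := congrArg (fun ν => ν E) (hinv (Z i) (hZ i))
    simp only [Measure.map_apply (hmeas i) hE, Measure.map_apply hY hE] at h1
    simp only [measureReal_def]
    exact congrArg ENNReal.toReal h1
  have hcard : (0 : ℝ) < Fintype.card I := by exact_mod_cast Fintype.card_pos
  have hInt : ∀ i, Integrable
      ({ω | Z i * Y ω * star (Z i) ∈ E}.indicator (1 : Ω → ℝ)) ℙ := fun i =>
    (integrable_const (1 : ℝ)).indicator (hset i)
  have h2 : ℙ.real {ω | Y ω ∈ E} * Fintype.card I ≤ τ * Fintype.card I := by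
    calc ℙ.real {ω | Y ω ∈ E} * Fintype.card I
        = ∑ i : I, ∫ ω, {ω | Z i * Y ω * star (Z i) ∈ E}.indicator (1 : Ω → ℝ) ω ∂ℙ := by
          simp only [integral_indicator_one (hset _), heq]
          simp [mul_comm]
      _ = ∫ ω, ∑ i : I, {ω | Z i * Y ω * star (Z i) ∈ E}.indicator (1 : Ω → ℝ) ω ∂ℙ :=
          (integral_finsetSum _ fun i _ => hInt i).symm
      _ ≤ ∫ _ω, τ * Fintype.card I ∂ℙ := by
          refine integral_mono (integrable_finsetSum _ fun i _ => hInt i) (integrable_const _) ?_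
          intro ω
          have h3 := (div_le_iff₀ hcard).mp (h ω)
          refine le_trans (le_of_eq (Finset.sum_congr rfl fun i _ => ?_)) h3
          simp [Set.indicator_apply]
      _ = _ := by simp
  exact le_of_mul_le_mul_right h2 hcard

/-! ### The typical set and the exceptional events -/

/-- Positive matrices bounded by `β` whose first two normalised moments are `ε`-close to
`m` and `q`. -/
def typicalSet (n d : ℕ) (β m q ε : ℝ) : Set (Matrix (Fin n × Fin d) (Fin n × Fin d) ℂ) :=
  {X | X.PosSemidef ∧ ((β : ℂ) • (1 : Matrix (Fin n × Fin d) (Fin n × Fin d) ℂ) - X).PosSemidef ∧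
    ‖((n : ℂ) * (d : ℂ))⁻¹ * X.trace - m‖ ≤ ε ∧ ‖((n : ℂ) * (d : ℂ))⁻¹ * (X * X).trace - q‖ ≤ ε}

/-- Matrices whose compression along `a` is not bounded by `c`. -/
def exceedSet (n d : ℕ) (c : ℝ) (a : Fin n → ℂ) : Set (Matrix (Fin n × Fin d) (Fin n × Fin d) ℂ) :=
  {X | ∃ v : Fin d → ℂ, star v ⬝ᵥ v = 1 ∧ c < quadRe X (prodVec a v)}

lemma measurableSet_typicalSet (n d : ℕ) (β m q ε : ℝ) :
    MeasurableSet (typicalSet n d β m q ε) := by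
  refine IsClosed.measurableSet ?_
  refine isClosed_setOf_posSemidef.inter (IsClosed.inter ?_ (IsClosed.inter ?_ ?_))
  · exact isClosed_setOf_posSemidef.preimage (continuous_const.sub continuous_id)
  · have h : Continuous fun X : Matrix (Fin n × Fin d) (Fin n × Fin d) ℂ =>
        ‖((n : ℂ) * (d : ℂ))⁻¹ * X.trace - m‖ := by fun_prop
    exact isClosed_le h continuous_const
  · have h : Continuous fun X : Matrix (Fin n × Fin d) (Fin n × Fin d) ℂ =>
        ‖((n : ℂ) * (d : ℂ))⁻¹ * (X * X).trace - q‖ := by fun_prop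
    exact isClosed_le h continuous_const

lemma measurableSet_exceedSet (n d : ℕ) (c : ℝ) (a : Fin n → ℂ) :
    MeasurableSet (exceedSet n d c a) := by
  refine IsOpen.measurableSet ?_
  have : exceedSet n d c a = ⋃ v : {v : Fin d → ℂ // star v ⬝ᵥ v = 1},
      {X | c < quadRe X (prodVec a v.1)} := by
    ext X; simp [exceedSet]
  rw [this]
  refine isOpen_iUnion fun v => isOpen_lt continuous_const ?_
  exact Complex.continuous_re.comp
    (continuous_const.dotProduct (Continuous.matrix_mulVec continuous_id continuous_const))

lemma mem_typicalSet_of_conj {n d : ℕ} {β m q ε : ℝ}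
    {X Z : Matrix (Fin n × Fin d) (Fin n × Fin d) ℂ} (hZ : Zᴴ * Z = 1)
    (h : Z * X * Zᴴ ∈ typicalSet n d β m q ε) : X ∈ typicalSet n d β m q ε := by
  have hX : Zᴴ * (Z * X * Zᴴ) * Z = X := by
    calc _ = (Zᴴ * Z) * X * (Zᴴ * Z) := by simp only [Matrix.mul_assoc]
      _ = X := by rw [hZ, Matrix.one_mul, Matrix.mul_one]
  have htr : ∀ Y : Matrix (Fin n × Fin d) (Fin n × Fin d) ℂ, (Z * Y * Zᴴ).trace = Y.trace := by
    intro Y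
    rw [Matrix.trace_mul_comm, ← Matrix.mul_assoc, hZ, Matrix.one_mul]
  have hsq : Z * X * Zᴴ * (Z * X * Zᴴ) = Z * (X * X) * Zᴴ := by
    calc _ = Z * X * (Zᴴ * Z) * X * Zᴴ := by simp only [Matrix.mul_assoc]
      _ = _ := by rw [hZ, Matrix.mul_one]; simp only [Matrix.mul_assoc]
  obtain ⟨h1, h2, h3, h4⟩ := h
  rw [hsq, htr] at h4
  rw [htr] at h3
  refine ⟨?_, ?_, h3, h4⟩
  · have := h1.conjTranspose_mul_mul_same Z
    rwa [hX] at this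
  · have := h2.conjTranspose_mul_mul_same Z
    rwa [Matrix.mul_sub, Matrix.sub_mul, hX, Matrix.mul_smul, Matrix.smul_mul, Matrix.mul_one,
      hZ] at this

lemma abs_re_sub_le {N : ℝ} (hN : 0 < N) {z : ℂ} {m ε : ℝ}
    (h : ‖((N : ℝ) : ℂ)⁻¹ * z - m‖ ≤ ε) : |z.re - N * m| ≤ ε * N := by
  have h1 := (Complex.abs_re_le_norm _).trans h
  rw [Complex.sub_re, Complex.ofReal_re, ← Complex.ofReal_inv, Complex.re_ofReal_mul] at h1
  calc |z.re - N * m| = |N * (N⁻¹ * z.re - m)| := by congr 1; field_simp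
    _ = N * |N⁻¹ * z.re - m| := by rw [abs_mul, abs_of_pos hN]
    _ ≤ N * ε := by gcongr
    _ = _ := mul_comm _ _

lemma typicalSet_moments {n d : ℕ} (hn : 0 < n) (hd : 0 < d) {β m q ε : ℝ}
    {X : Matrix (Fin n × Fin d) (Fin n × Fin d) ℂ} (hX : X ∈ typicalSet n d β m q ε) :
    |X.trace.re - n * d * m| ≤ ε * (n * d) ∧ |(X * X).trace.re - n * d * q| ≤ ε * (n * d) := by
  have hN : (0 : ℝ) < (n : ℝ) * d := by positivity
  obtain ⟨-, -, h3, h4⟩ := hX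
  exact ⟨abs_re_sub_le hN (by push_cast; exact h3), abs_re_sub_le hN (by push_cast; exact h4)⟩

/-- The trace of the resolvent of a typical matrix is controlled by its first two moments. -/
lemma resolventPow_one_le_of_typical {n d : ℕ} (hn : 0 < n) (hd : 0 < d) {B m σ s ε : ℝ}
    (hm : 0 < m) (hε : ε < s) (hmB : m < B + s)
    {X : Matrix (Fin n × Fin d) (Fin n × Fin d) ℂ}
    (hX : X ∈ typicalSet n d (B + ε) m (m ^ 2 + σ ^ 2) ε) :
    resolventPow (B + s) X 1 ≤ (1 / (B + s - m) + ε / (B + s - m) ^ 2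
      + (σ ^ 2 + (1 + 2 * m) * ε) / ((B + s - m) ^ 2 * (s - ε))) * (n * d) := by
  obtain ⟨h1, h2⟩ := typicalSet_moments hn hd hX
  have h3 := resolventPow_one_le (β := B + ε) (ζ := B + s) (m := m) (by linarith) hmB hX.1 hX.2.1
  have hcard : (Fintype.card (Fin n × Fin d) : ℝ) = n * d := by simp
  rw [hcard] at h3
  have hN : (0 : ℝ) < (n : ℝ) * d := by positivity
  have hw : 0 < B + s - m := by linarith
  have hs : B + s - (B + ε) = s - ε := by ring
  have hs0 : 0 < s - ε := by linarith
  rw [hs] at h3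
  refine h3.trans ?_
  have h4 : X.trace.re - n * d * m ≤ ε * (n * d) := (abs_le.mp h1).2
  have h4' := (abs_le.mp h1).1
  have h5 : (X * X).trace.re - 2 * m * X.trace.re + n * d * m ^ 2
      ≤ (σ ^ 2 + (1 + 2 * m) * ε) * (n * d) := by
    have h6 := (abs_le.mp h2).2
    nlinarith
  calc _ ≤ (n * d : ℝ) / (B + s - m) + ε * (n * d) / (B + s - m) ^ 2
        + (σ ^ 2 + (1 + 2 * m) * ε) * (n * d) / ((B + s - m) ^ 2 * (s - ε)) := by gcongr
    _ = _ := by ring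

/-! ### Reindexing to the tensor product -/

/-- The identification of `Fin (d + (n - 1) * d)` with `Fin n × Fin d` that sends the first `d`
indices to the block `{0} × Fin d`. -/
def splitEquiv {n : ℕ} (hn : 1 ≤ n) (d : ℕ) : Fin (d + (n - 1) * d) ≃ Fin n × Fin d :=
  (finCongr (by
    obtain ⟨k, rfl⟩ := Nat.exists_eq_add_of_le hn
    rw [Nat.add_sub_cancel_left]; ring)).trans finProdFinEquiv.symm

lemma splitEquiv_symm_zero {n : ℕ} (hn : 1 ≤ n) (d : ℕ) (j : Fin d) :
    (splitEquiv hn d).symm (⟨0, hn⟩, j) = Fin.castAdd ((n - 1) * d) j := by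
  ext
  simp [splitEquiv]

lemma trace_submatrix_equiv {ι ι' : Type*} [Fintype ι] [Fintype ι'] (e : ι' ≃ ι)
    (X : Matrix ι ι ℂ) : (X.submatrix e e).trace = X.trace := by
  simp only [Matrix.trace, diag_apply, submatrix_apply]
  exact e.sum_comp (fun i => X i i)

lemma smul_one_sub_submatrix_equiv {ι ι' : Type*} [DecidableEq ι] [DecidableEq ι'] (e : ι' ≃ ι)
    (z : ℂ) (X : Matrix ι ι ℂ) :
    z • (1 : Matrix ι' ι' ℂ) - X.submatrix e e
      = (z • (1 : Matrix ι ι ℂ) - X).submatrix e e := by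
  ext i j
  simp [Matrix.one_apply]

lemma resolventPow_submatrix_equiv {ι ι' : Type*} [Fintype ι] [Fintype ι'] [DecidableEq ι]
    [DecidableEq ι'] (e : ι' ≃ ι) (z : ℝ) (X : Matrix ι ι ℂ) (q : ℕ) :
    resolventPow z (X.submatrix e e) q = resolventPow z X q := by
  have hpow : ∀ Y : Matrix ι ι ℂ, (Y.submatrix e e) ^ q = (Y ^ q).submatrix e e := by
    intro Y
    induction q with
    | zero => simp
    | succ q ih => rw [pow_succ, pow_succ, ih, submatrix_mul_equiv]
  rw [resolventPow, smul_one_sub_submatrix_equiv, inv_submatrix_equiv, hpow,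
    trace_submatrix_equiv, resolventPow]

lemma quadRe_conj {ι : Type*} [Fintype ι] (M X : Matrix ι ι ℂ) (w : ι → ℂ) :
    quadRe (M * X * Mᴴ) w = quadRe X (Mᴴ *ᵥ w) := by
  rw [quadRe, quadRe, star_mulVec, conjTranspose_conjTranspose, ← dotProduct_mulVec,
    Matrix.mulVec_mulVec, Matrix.mulVec_mulVec, Matrix.mul_assoc]

lemma quadRe_head {n d : ℕ} (hn : 1 ≤ n)
    (Y : Matrix (Fin (d + (n - 1) * d)) (Fin (d + (n - 1) * d)) ℂ) (v : Fin d → ℂ) :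
    quadRe (Y.submatrix (splitEquiv hn d).symm (splitEquiv hn d).symm)
      (prodVec (Pi.single ⟨0, hn⟩ 1) v) = quadRe (corner ((n - 1) * d) Y) v := by
  simp only [quadRe, dotProduct, mulVec, prodVec, Fintype.sum_prod_type, submatrix_apply,
    Pi.star_apply, star_mul', corner]
  congr 1
  rw [Finset.sum_eq_single (⟨0, hn⟩ : Fin n) (by
    intro b _ hb
    refine Finset.sum_eq_zero fun j _ => ?_
    simp [Pi.single_eq_of_ne hb]) (by simp)]
  refine Finset.sum_congr rfl fun j _ => ?_
  rw [Finset.sum_eq_single (⟨0, hn⟩ : Fin n) (by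
    intro b _ hb
    refine Finset.sum_eq_zero fun j _ => ?_
    simp [Pi.single_eq_of_ne hb]) (by simp)]
  simp [splitEquiv_symm_zero]

lemma kronecker_one_conjTranspose_mulVec {n d : ℕ} {u : Matrix (Fin n) (Fin n) ℂ} (hu : uᴴ * u = 1)
    {a : Fin n → ℂ} {i₀ : Fin n} (ha : ∀ i, u i i₀ = a i) (v : Fin d → ℂ) :
    (u ⊗ₖ (1 : Matrix (Fin d) (Fin d) ℂ))ᴴ *ᵥ prodVec a v = prodVec (Pi.single i₀ 1) v := by
  ext ⟨k, j⟩
  have h1 := congrFun (congrFun hu k) i₀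
  simp only [Matrix.mul_apply, conjTranspose_apply, ha] at h1
  simp only [mulVec, dotProduct, Fintype.sum_prod_type, conjTranspose_apply, kroneckerMap_apply,
    prodVec, star_mul', Matrix.one_apply, apply_ite star, star_one, star_zero]
  have h2 : ∀ x : Fin n, ∑ y : Fin d, star (u x k) * (if y = j then 1 else 0) * (a x * v y)
      = star (u x k) * a x * v j := by
    intro x
    rw [Finset.sum_eq_single j (by intro b _ hb; simp [hb]) (by simp)]
    simp; ring
  rw [Finset.sum_congr rfl fun x _ => h2 x, ← Finset.sum_mul, h1, Matrix.one_apply, Pi.single_apply]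

/-- For a unitarily invariant random matrix, being typical but having a large compression along
a fixed direction is as unlikely as a bad rotation. -/
lemma measureReal_typical_inter_exceed_le {n d : ℕ} (hn : 1 ≤ n) {Ω : Type*} [MeasurableSpace Ω]
    {ℙ : Measure Ω} [IsProbabilityMeasure ℙ]
    {Y : Ω → Matrix (Fin n × Fin d) (Fin n × Fin d) ℂ} (hY : Measurable Y)
    (hinv : ∀ U ∈ unitary (Matrix (Fin n × Fin d) (Fin n × Fin d) ℂ),
      Measure.map (fun ω => U * Y ω * star U) ℙ = Measure.map Y ℙ)
    {β m q ε ζ r c τ : ℝ} (hτ : 0 ≤ τ)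
    (htyp : ∀ X ∈ typicalSet n d β m q ε, resolventPow ζ X 1 ≤ r)
    {I : Type} [Fintype I] [Nonempty I]
    {U : I → Matrix (Fin (d + (n - 1) * d)) (Fin (d + (n - 1) * d)) ℂ}
    (hU : ∀ i, (U i)ᴴ * U i = 1)
    (hbad : ∀ X : Matrix (Fin (d + (n - 1) * d)) (Fin (d + (n - 1) * d)) ℂ, X.PosSemidef →
      ((β : ℂ) • (1 : Matrix (Fin (d + (n - 1) * d)) (Fin (d + (n - 1) * d)) ℂ) - X).PosSemidef →
      resolventPow ζ X 1 ≤ r → badFrac c U X ≤ τ)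
    {a : Fin n → ℂ} (ha : star a ⬝ᵥ a = 1) :
    ℙ.real {ω | Y ω ∈ typicalSet n d β m q ε ∩ exceedSet n d c a} ≤ τ := by
  classical
  obtain ⟨u, hu, hu', hua⟩ := exists_unitary_col ha (⟨0, hn⟩ : Fin n)
  set e := splitEquiv hn d with he
  set Z : I → Matrix (Fin n × Fin d) (Fin n × Fin d) ℂ := fun i =>
    (u ⊗ₖ (1 : Matrix (Fin d) (Fin d) ℂ)) * (U i).submatrix e.symm e.symm with hZdef
  have hK : (u ⊗ₖ (1 : Matrix (Fin d) (Fin d) ℂ))ᴴ * (u ⊗ₖ (1 : Matrix (Fin d) (Fin d) ℂ)) = 1 := by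
    rw [conjTranspose_kronecker, ← mul_kronecker_mul, hu, conjTranspose_one, Matrix.one_mul,
      one_kronecker_one]
  have hZ : ∀ i, (Z i)ᴴ * Z i = 1 := by
    intro i
    calc (Z i)ᴴ * Z i = ((U i).submatrix e.symm e.symm)ᴴ
          * ((u ⊗ₖ (1 : Matrix (Fin d) (Fin d) ℂ))ᴴ * (u ⊗ₖ (1 : Matrix (Fin d) (Fin d) ℂ)))
          * (U i).submatrix e.symm e.symm := by
          rw [hZdef, conjTranspose_mul]; simp only [Matrix.mul_assoc]
      _ = 1 := by
          rw [hK, Matrix.mul_one, conjTranspose_submatrix, submatrix_mul_equiv, hU,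
            submatrix_one_equiv]
  have hZu : ∀ i, Z i ∈ unitary (Matrix (Fin n × Fin d) (Fin n × Fin d) ℂ) := fun i =>
    mem_unitaryGroup_iff'.mpr (hZ i)
  refine measureReal_le_of_rotations hY hinv
    ((measurableSet_typicalSet n d β m q ε).inter (measurableSet_exceedSet n d c a)) hZu ?_
  intro ω
  by_cases hX : Y ω ∈ typicalSet n d β m q ε
  swap
  · have h0 : ∀ i, Z i * Y ω * star (Z i) ∉ typicalSet n d β m q ε ∩ exceedSet n d c a :=
      fun i hi => hX (mem_typicalSet_of_conj (hZ i) hi.1)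
    simp only [h0, if_false, Finset.sum_const_zero, zero_div, hτ]
  refine le_trans ?_ (hbad ((Y ω).submatrix e e) (hX.1.submatrix _) ?_ ?_)
  · unfold badFrac
    gcongr with i
    by_cases hpos : ((c : ℂ) • (1 : Matrix (Fin d) (Fin d) ℂ)
        - corner ((n - 1) * d) (U i * (Y ω).submatrix e e * (U i)ᴴ)).PosDef
    swap
    · rw [if_neg hpos]; split_ifs <;> norm_num
    rw [if_pos hpos, if_neg]
    rintro ⟨-, v, hv, hvc⟩
    have hconj : Z i * Y ω * star (Z i) = (u ⊗ₖ (1 : Matrix (Fin d) (Fin d) ℂ))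
        * (U i * (Y ω).submatrix e e * (U i)ᴴ).submatrix e.symm e.symm
        * (u ⊗ₖ (1 : Matrix (Fin d) (Fin d) ℂ))ᴴ := by
      have h1 : (U i * (Y ω).submatrix e e * (U i)ᴴ).submatrix e.symm e.symm
          = (U i).submatrix e.symm e.symm * Y ω * ((U i).submatrix e.symm e.symm)ᴴ := by
        rw [conjTranspose_submatrix, ← submatrix_mul_equiv _ _ _ e.symm,
          ← submatrix_mul_equiv _ _ _ e.symm, submatrix_submatrix]
        simp
      rw [h1, star_eq_conjTranspose, hZdef, conjTranspose_mul]
      simp only [Matrix.mul_assoc]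
    rw [hconj, quadRe_conj, kronecker_one_conjTranspose_mulVec hu hua, he, quadRe_head] at hvc
    have h2 := quadRe_le_of_posSemidef_sub hpos.posSemidef v
    rw [hv, Complex.one_re, mul_one] at h2
    exact absurd hvc (not_lt.mpr h2)
  · rw [smul_one_sub_submatrix_equiv]
    exact hX.2.1.submatrix _
  · rw [resolventPow_submatrix_equiv]
    exact htyp _ hX

/-! ### Consequences of strong convergence -/

lemma polyApply_X {ι : Type*} [Fintype ι] [DecidableEq ι] (M : Matrix ι ι ℂ) :
    polyApply Polynomial.X M = M := by
  simp [polyApply]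

lemma polyApply_X_sq {ι : Type*} [Fintype ι] [DecidableEq ι] (M : Matrix ι ι ℂ) :
    polyApply (Polynomial.X ^ 2) M = M * M := by
  simp [polyApply, sq]

lemma posSemidef_smul_one_sub_of_opNorm_le {ι : Type*} [Fintype ι] [DecidableEq ι]
    {M : Matrix ι ι ℂ} (hM : M.PosSemidef) {β : ℝ} (h : opNorm M ≤ β) :
    ((β : ℂ) • (1 : Matrix ι ι ℂ) - M).PosSemidef := by
  rw [posSemidef_iff_dotProduct_mulVec]
  constructor
  · have h1 : Mᴴ = M := hM.1
    rw [IsHermitian, conjTranspose_sub, conjTranspose_smul, conjTranspose_one, h1]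
    simp
  · intro x
    have h0 := hM.dotProduct_mulVec_nonneg x
    have h1 : ‖star x ⬝ᵥ (M *ᵥ x)‖ ≤ β * ‖WithLp.toLp 2 x‖ ^ 2 := by
      have h2 : star x ⬝ᵥ (M *ᵥ x) = inner ℂ (WithLp.toLp 2 x)
          (Matrix.toEuclideanCLM (𝕜 := ℂ) M (WithLp.toLp 2 x)) := by
        rw [EuclideanSpace.inner_eq_star_dotProduct, toEuclideanCLM_toLp, dotProduct_comm]
      calc ‖star x ⬝ᵥ (M *ᵥ x)‖
          ≤ ‖WithLp.toLp 2 x‖ * ‖Matrix.toEuclideanCLM (𝕜 := ℂ) M (WithLp.toLp 2 x)‖ := by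
            rw [h2]; exact norm_inner_le_norm _ _
        _ ≤ ‖WithLp.toLp 2 x‖ * (opNorm M * ‖WithLp.toLp 2 x‖) := by
            gcongr; exact ContinuousLinearMap.le_opNorm _ _
        _ ≤ ‖WithLp.toLp 2 x‖ * (β * ‖WithLp.toLp 2 x‖) := by gcongr
        _ = _ := by ring
    have h3 : star x ⬝ᵥ (M *ᵥ x) = ((star x ⬝ᵥ (M *ᵥ x)).re : ℂ) :=
      (Complex.nonneg_iff.mp h0).2 |> fun h => Complex.ext (by simp) (by simpa using h.symm)
    rw [sub_mulVec, dotProduct_sub, smul_mulVec, one_mulVec, dotProduct_smul, smul_eq_mul,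
      star_dotProduct_self_re, h3, ← Complex.ofReal_mul, ← Complex.ofReal_sub]
    exact Complex.zero_le_real.mpr
      (sub_nonneg.mpr ((Complex.re_le_norm _).trans h1))

lemma trace_re_le_opNorm {n d : ℕ} {M : Matrix (Fin n × Fin d) (Fin n × Fin d) ℂ}
    (hM : M.PosSemidef) : M.trace.re ≤ opNorm M * (n * d) := by
  have h := (posSemidef_smul_one_sub_of_opNorm_le hM le_rfl).trace_nonneg
  rw [trace_sub, trace_smul, trace_one] at h
  have h1 := (Complex.nonneg_iff.mp h).1
  rw [Complex.sub_re, smul_eq_mul, Complex.re_ofReal_mul] at h1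
  simp only [Fintype.card_prod, Fintype.card_fin, Nat.cast_mul] at h1
  have h2 : ((n : ℂ) * (d : ℂ)).re = n * d := by rw [← Nat.cast_mul, Complex.natCast_re]; simp
  rw [h2] at h1
  linarith

/-- The operator norms of a strongly convergent sequence of positive semidefinite matrices have
a limit between the mean and the right edge of the support. -/
lemma sSup_msupport_mem_Icc {n : ℕ} (hn : 0 < n) {A B m S : ℝ} (hA : 0 ≤ A) (hm : 0 < m)
    {μ : Measure ℝ} (hsupp : msupport μ ⊆ Set.Icc A B)
    (hS : S = sSup ((fun x : ℝ => |x|) '' msupport μ))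
    {M : (d : ℕ) → Matrix (Fin n × Fin d) (Fin n × Fin d) ℂ} (hM : ∀ d, (M d).PosSemidef)
    (htr : Tendsto (fun d : ℕ => ((n : ℂ) * (d : ℂ))⁻¹ * (M d).trace) atTop (𝓝 (m : ℂ)))
    (hop : Tendsto (fun d => opNorm (M d)) atTop (𝓝 S)) : m ≤ S ∧ S ≤ B := by
  have h1 : m ≤ S := by
    have h2 := (Complex.continuous_re.tendsto _).comp htr
    rw [Complex.ofReal_re] at h2
    refine le_of_tendsto_of_tendsto h2 hop ?_
    filter_upwards [eventually_gt_atTop 0] with d hd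
    have hN : (0 : ℝ) < (n : ℝ) * d := by positivity
    have h3 : ((n : ℂ) * (d : ℂ))⁻¹ = (((n : ℝ) * d)⁻¹ : ℝ) := by push_cast; rfl
    simp only [Function.comp_apply]
    rw [h3, Complex.re_ofReal_mul, inv_mul_le_iff₀ hN, mul_comm]
    exact trace_re_le_opNorm (hM d)
  refine ⟨h1, ?_⟩
  rcases (msupport μ).eq_empty_or_nonempty with h | h
  · rw [h, Set.image_empty, Real.sSup_empty] at hS
    linarith
  · rw [hS]
    refine csSup_le (h.image _) ?_
    rintro _ ⟨x, hx, rfl⟩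
    have := hsupp hx
    simpa only [abs_of_nonneg (hA.trans this.1)] using this.2

/-- A strongly convergent sequence of positive semidefinite matrices is eventually typical. -/
lemma eventually_mem_typicalSet {n : ℕ} {B m q S ε : ℝ} (hε : 0 < ε) (hSB : S ≤ B)
    {M : (d : ℕ) → Matrix (Fin n × Fin d) (Fin n × Fin d) ℂ} (hM : ∀ d, (M d).PosSemidef)
    (htr : Tendsto (fun d : ℕ => ((n : ℂ) * (d : ℂ))⁻¹ * (M d).trace) atTop (𝓝 (m : ℂ)))
    (hsq : Tendsto (fun d : ℕ => ((n : ℂ) * (d : ℂ))⁻¹ * (M d * M d).trace) atTop (𝓝 (q : ℂ)))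
    (hop : Tendsto (fun d => opNorm (M d)) atTop (𝓝 S)) :
    ∀ᶠ d in atTop, M d ∈ typicalSet n d (B + ε) m q ε := by
  filter_upwards [Metric.tendsto_nhds.mp htr ε hε, Metric.tendsto_nhds.mp hsq ε hε,
    hop.eventually_lt_const (by linarith : S < B + ε)] with d h1 h2 h3
  rw [dist_eq_norm] at h1 h2
  exact ⟨hM d, posSemidef_smul_one_sub_of_opNorm_le (hM d) h3.le, h1.le, h2.le⟩

/-- A typical matrix whose compressions along a net are controlled is not separable. -/
lemma notMem_SEP_of_typical {n d : ℕ} (hn : 0 < n) (hd : 0 < d) {β m q c ε : ℝ} (hε : 0 < ε)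
    (hβ : 0 ≤ β) (hpos : 0 < (1 + ε) * c + (ε ^ 2 + ε) * β)
    (hlt : ((1 + ε) * c + (ε ^ 2 + ε) * β) * (m + ε) < q - ε)
    {F : Set (EuclideanSpace ℂ (Fin n))}
    (hF : Metric.sphere 0 1 ⊆ ⋃ x ∈ F, Metric.ball x ε)
    {M : Matrix (Fin n × Fin d) (Fin n × Fin d) ℂ} (hM : M ∈ typicalSet n d β m q ε)
    (hc : ∀ x ∈ F, M ∉ exceedSet n d c (WithLp.ofLp x)) : M ∉ SEP n d := by
  intro hS
  have h1 := trace_sq_le_of_mem_SEP (quadRe_prodVec_le_of_net hε hβ hM.1 hM.2.1 hF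
    fun x hx v hv => not_lt.mp fun h => hc x hx ⟨v, hv, h⟩) hS
  obtain ⟨h2, h3⟩ := typicalSet_moments hn hd hM
  have hN : (0 : ℝ) < (n : ℝ) * d := by positivity
  have h4 : M.trace.re ≤ (m + ε) * (n * d) := by linarith [(abs_le.mp h2).2]
  have h5 : (q - ε) * (n * d) ≤ (M * M).trace.re := by linarith [(abs_le.mp h3).1]
  have h6 := mul_le_mul_of_nonneg_left h4 hpos.le
  have h7 := mul_lt_mul_of_pos_right hlt hN
  linarith

lemma ae_eventually_notMem_of_summable {Ω : Type*} [MeasurableSpace Ω] {ℙ : Measure Ω}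
    [IsFiniteMeasure ℙ] {E : ℕ → Set Ω} {τ : ℕ → ℝ} (hτ : Summable τ)
    (h : ∀ᶠ d in atTop, ℙ.real (E d) ≤ τ d) : ∀ᵐ ω ∂ℙ, ∀ᶠ d in atTop, ω ∉ E d := by
  refine ae_eventually_notMem ?_
  have hs : Summable fun d => ℙ.real (E d) :=
    Summable.of_norm_bounded_eventually_nat hτ (by
      filter_upwards [h] with d hd
      rwa [Real.norm_of_nonneg measureReal_nonneg])
  have h1 := hs.tsum_ofReal_ne_top
  simp_rw [ofReal_measureReal (measure_ne_top _ _)] at h1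
  exact h1

/-- If `B/m < 1 + nσ²/m² − 2(σ/m)√(n−1)`, a unitarily invariant
strongly convergent sequence of random PSD matrices is asymptotically entangled. -/
theorem stmt3
    {Ω : Type*} [MeasurableSpace Ω] (ℙ : Measure Ω) [IsProbabilityMeasure ℙ]
    (n : ℕ) (hn : 2 ≤ n)
    (X : (d : ℕ) → Ω → Matrix (Fin n × Fin d) (Fin n × Fin d) ℂ)
    (hmeas : ∀ d, Measurable (X d))
    (hpsd : ∀ d ω, (X d ω).PosSemidef)
    (hUI : UnitInv ℙ n X)
    (μ : Measure ℝ) [IsProbabilityMeasure μ]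
    (A B m σ : ℝ) (hA : 0 ≤ A) (hσ : 0 ≤ σ) (hm : 0 < m)
    (hsupp : msupport μ ⊆ Set.Icc A B)
    (hmean : (∫ x, x ∂μ) = m)
    (hvar : (∫ x, x ^ 2 ∂μ) - m ^ 2 = σ ^ 2)
    (hconv : StrongConv ℙ n X μ)
    (hcond : B / m < 1 + (n : ℝ) * σ ^ 2 / m ^ 2 - 2 * (σ / m) * Real.sqrt ((n : ℝ) - 1)) :
    (∀ᵐ ω ∂ℙ, ∀ᶠ d : ℕ in atTop, X d ω ∉ SEP n d) ∧
      Tendsto (fun d : ℕ => ℙ {ω | X d ω ∈ SEP n d}) atTop (𝓝 0) := by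
  have hn0 : 0 < n := by omega
  have hn' : (2 : ℝ) ≤ n := by exact_mod_cast hn
  obtain ⟨S, hS⟩ : ∃ S, S = sSup ((fun x : ℝ => |x|) '' msupport μ) := ⟨_, rfl⟩
  have hlim : ∀ᵐ ω ∂ℙ,
      Tendsto (fun d : ℕ => ((n : ℂ) * (d : ℂ))⁻¹ * (X d ω).trace) atTop (𝓝 (m : ℂ)) ∧
      Tendsto (fun d : ℕ => ((n : ℂ) * (d : ℂ))⁻¹ * (X d ω * X d ω).trace) atTop
        (𝓝 ((m ^ 2 + σ ^ 2 : ℝ) : ℂ)) ∧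
      Tendsto (fun d => opNorm (X d ω)) atTop (𝓝 S) := by
    filter_upwards [hconv] with ω hω
    have h1 := hω Polynomial.X
    have h2 := (hω (Polynomial.X ^ 2)).1
    simp only [polyApply_X, Polynomial.eval_X, hmean, ← hS] at h1
    simp only [polyApply_X_sq, Polynomial.eval_pow, Polynomial.eval_X] at h2
    rw [show (∫ x, x ^ 2 ∂μ) = m ^ 2 + σ ^ 2 by linarith] at h2
    exact ⟨h1.1, h2, h1.2⟩
  obtain ⟨hmS, hSB⟩ : m ≤ S ∧ S ≤ B := by
    obtain ⟨ω, h1, -, h3⟩ := hlim.exists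
    exact sSup_msupport_mem_Icc hn0 hA hm hsupp hS (fun d => hpsd d ω) h1 h3
  have hmB : m ≤ B := hmS.trans hSB
  have hσ0 : 0 < σ := by
    refine lt_of_le_of_ne hσ fun h => ?_
    subst h
    have : 1 ≤ B / m := (one_le_div hm).mpr hmB
    norm_num at hcond
    linarith
  set s := σ * Real.sqrt ((n : ℝ) - 1) with hs
  have hs0 : 0 < s := mul_pos hσ0 (Real.sqrt_pos.mpr (by linarith))
  have hs2 : s ^ 2 = σ ^ 2 * ((n : ℝ) - 1) := by
    rw [hs, mul_pow, Real.sq_sqrt (by linarith)]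
  have hcond' : B - m + 2 * s < n * σ ^ 2 / m := by
    have h1 := mul_lt_mul_of_pos_right hcond hm
    have h2 : B / m * m = B := by field_simp
    have h3 : (1 + (n : ℝ) * σ ^ 2 / m ^ 2 - 2 * (σ / m) * Real.sqrt ((n : ℝ) - 1)) * m
        = m + n * σ ^ 2 / m - 2 * s := by rw [hs]; field_simp
    rw [h2, h3] at h1
    linarith
  obtain ⟨ε, hε, hε1, hεs, hpos, hlt⟩ := exists_slack hn hm hmB hs0 hs2 hσ0 hcond'
  obtain ⟨F, hFs, hFfin, hF⟩ :=
    (isCompact_sphere (0 : EuclideanSpace ℂ (Fin n)) 1).finite_cover_balls hε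
  have hw : 0 < B + s - m := by linarith
  have hsε : 0 < s - ε := by linarith
  obtain ⟨τ, hτ0, hτs, hτ⟩ := exists_rotation_family_rate hn (κ := ε) (ζ := B + s) (β := B + ε)
    (g := 1 / (B + s - m) + ε / (B + s - m) ^ 2
      + (σ ^ 2 + (1 + 2 * m) * ε) / ((B + s - m) ^ 2 * (s - ε)))
    hε hε1 (by positivity) (by linarith) (by linarith)
  set T : ℕ → Set Ω := fun d => {ω | X d ω ∈ typicalSet n d (B + ε) m (m ^ 2 + σ ^ 2) ε} with hT
  set E : EuclideanSpace ℂ (Fin n) → ℕ → Set Ω := fun x d =>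
    {ω | X d ω ∈ typicalSet n d (B + ε) m (m ^ 2 + σ ^ 2) ε
      ∩ exceedSet n d (barrierEdge n B m σ s ε) (WithLp.ofLp x)} with hE
  have hEae : ∀ x ∈ F, ∀ᵐ ω ∂ℙ, ∀ᶠ d in atTop, ω ∉ E x d := by
    intro x hx
    refine ae_eventually_notMem_of_summable hτs ?_
    filter_upwards [hτ, eventually_gt_atTop 0] with d hd hd0
    obtain ⟨I, hI, hI', U, hU, hbad⟩ := hd
    refine measureReal_typical_inter_exceed_le (by omega) (hmeas d) (hUI d) (hτ0 d)
      (fun M hM => resolventPow_one_le_of_typical hn0 hd0 hm hεs (by linarith) hM) hU hbad ?_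
    have h1 : ‖x‖ = 1 := by simpa using hFs hx
    rw [star_dotProduct_self_re, WithLp.toLp_ofLp, h1]
    norm_num
  set D : ℕ → Set Ω := fun d => (T d)ᶜ ∪ ⋃ x ∈ F, E x d with hD
  have hDmeas : ∀ d, MeasurableSet (D d) := fun d =>
    ((hmeas d) (measurableSet_typicalSet ..)).compl.union
      (hFfin.measurableSet_biUnion fun x _ => (hmeas d)
        ((measurableSet_typicalSet ..).inter (measurableSet_exceedSet ..)))
  have hDae : ∀ᵐ ω ∂ℙ, ∀ᶠ d in atTop, ω ∉ D d := by
    filter_upwards [hlim, (ae_ball_iff hFfin.countable).mpr hEae] with ω hω hωE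
    filter_upwards [eventually_mem_typicalSet hε hSB (fun d => hpsd d ω) hω.1 hω.2.1 hω.2.2,
      (hFfin.eventually_all).mpr hωE] with d h1 h2
    simp only [hD, Set.mem_union, Set.mem_compl_iff, Set.mem_iUnion, not_or, not_not, not_exists]
    exact ⟨h1, h2⟩
  have hsub : ∀ d, 0 < d → {ω | X d ω ∈ SEP n d} ⊆ D d := by
    intro d hd ω hω
    by_contra hωD
    simp only [hD, Set.mem_union, Set.mem_compl_iff, Set.mem_iUnion, not_or, not_not,
      not_exists] at hωD
    exact notMem_SEP_of_typical hn0 hd hε (by linarith) hpos hlt hF hωD.1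
      (fun x hx hxe => hωD.2 x hx ⟨hωD.1, hxe⟩) hω
  constructor
  · filter_upwards [hDae] with ω hω
    filter_upwards [hω, eventually_gt_atTop 0] with d h1 h2 h3
    exact h1 (hsub d h2 h3)
  · have h0 := tendsto_measure_of_ae_tendsto_indicator_of_isFiniteMeasure atTop
      (μ := ℙ) (A := ∅) MeasurableSet.empty hDmeas (by simpa using hDae)
    rw [measure_empty] at h0
    refine tendsto_of_tendsto_of_tendsto_of_le_of_le' tendsto_const_nhds h0
      (Eventually.of_forall fun _ => zero_le) ?_
    filter_upwards [eventually_gt_atTop 0] with d hd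
    exact measure_mono (hsub d hd)
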